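/- arXiv:math/0408031 — 2 statements merged into one kernel-verified Lean document; each statement's English description precedes it below -/
import Mathlib

section
/- The expected length of the shortest cycle of a random n-cyclation satisfies Ex[T_n] ∼ (π^{1/2}/2)·(∫_0^∞ e^{E(x)/2 − x} dx)·n^{1/2} as n → ∞, i.e. Ex[T_n]/n^{1/2} tends to (π^{1/2}/2)·∫_0^∞ e^{E(x)/2 − x} dx, where E(x) = ∫_x^∞ (e^{−y}/y) dy. -/
/-- The fixed involution pairing the two endpoints of each interval:
endpoint `2m` is paired with endpoint `2m+1`. -/
def intervalPerm (n : ℕ) : Equiv.Perm (Fin (2 * n)) :=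
  Function.Involutive.toPerm
    (fun x => ⟨if x.1 % 2 = 0 then x.1 + 1 else x.1 - 1, by
      have := x.2; split <;> omega⟩)
    (fun x => by
      have := x.2
      ext
      simp only
      split_ifs <;> omega)

/-- An `n`-cyclation: a fixed-point-free involution (perfect matching) on the `2*n`
endpoints of the `n` intervals. -/
def Cyclation (n : ℕ) : Type :=
  {μ : Equiv.Perm (Fin (2 * n)) // (∀ x, μ x ≠ x) ∧ μ * μ = 1}

instance (n : ℕ) : Finite (Cyclation n) := Subtype.finite

noncomputable instance (n : ℕ) : Fintype (Cyclation n) := Fintype.ofFinite _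

/-- The subgroup generated by the matching and the interval pairing; its orbits on the
endpoints are exactly the connected components (cycles) of the cyclation, viewed as the
multigraph whose edges are the intervals together with the matched pairs. -/
def cycGroup {n : ℕ} (c : Cyclation n) : Subgroup (Equiv.Perm (Fin (2 * n))) :=
  Subgroup.closure {c.1, intervalPerm n}

/-- Number of cycles of a cyclation: the number of connected components, i.e. the number
of orbits of `cycGroup c` on the endpoints. -/
noncomputable def cycNumCycles {n : ℕ} (c : Cyclation n) : ℕ :=
  Nat.card (MulAction.orbitRel.Quotient (cycGroup c) (Fin (2 * n)))

/-- Number of cycles of length `l` of a cyclation (a cycle containing `l` intervals is a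
connected component with `2*l` endpoints). -/
noncomputable def cycNumCyclesOfLength {n : ℕ} (c : Cyclation n) (l : ℕ) : ℕ :=
  Nat.card {q : MulAction.orbitRel.Quotient (cycGroup c) (Fin (2 * n)) // q.orbit.ncard = 2 * l}

/-- Length (number of intervals) of the longest cycle of a cyclation. -/
noncomputable def longestCycle {n : ℕ} (c : Cyclation n) : ℕ :=
  (Finset.univ.sup fun x : Fin (2 * n) => (MulAction.orbit (cycGroup c) x).ncard) / 2

/-- Length (number of intervals) of the shortest cycle of a cyclation. -/
noncomputable def shortestCycle {n : ℕ} (c : Cyclation n) : ℕ :=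
  sInf (Set.range fun x : Fin (2 * n) => (MulAction.orbit (cycGroup c) x).ncard / 2)

/-- `Ex[M_n]`: the expected length of the longest cycle of a uniformly random
`n`-cyclation, i.e. the average of the longest cycle length over all `n`-cyclations. -/
noncomputable def ExM (n : ℕ) : ℝ :=
  (∑ c : Cyclation n, (longestCycle c : ℝ)) / Fintype.card (Cyclation n)

/-- `Ex[T_n]`: the expected length of the shortest cycle of a uniformly random
`n`-cyclation, i.e. the average of the shortest cycle length over all `n`-cyclations. -/
noncomputable def ExT (n : ℕ) : ℝ :=
  (∑ c : Cyclation n, (shortestCycle c : ℝ)) / Fintype.card (Cyclation n)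

/-- The exponential integral `E(x) = ∫_x^∞ e^{-y}/y dy`. -/
noncomputable def Efun (x : ℝ) : ℝ := ∫ y in Set.Ioi x, Real.exp (-y) / y

/-!
Removing one interval from a cyclation either deletes a cycle or glues two intervals into a
heavier one. Hence the number of cyclations all of whose cycles are longer than `k`, divided by
`2 ^ n n!`, satisfies a recursion in `n`, which is the differential equation
`dy/dz = y z ^ k / (2 (1 - z))` for its generating function, and so this function is
`exp (∑_{l > k} z ^ l / (2 l))`. For `z = e ^ (-s)` the exponent is half a Riemann sum of the
exponential integral and tends to `E(x) / 2` if `k s → x`.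

The sum over `k` of these normalized counts is, after multiplication by `n`, a partial sum of the
nonnegative coefficients of `(1 / 2) ∑_k z ^ k exp (∑_{l > k} z ^ l / (2 l))`. Multiplied by `s`,
this function is half a Riemann sum of `e ^ (E(x) / 2 - x)`, so the Hardy–Littlewood Tauberian
theorem, in Karamata's proof by polynomial approximation, gives the limit of the sum over `k`.
Dividing by the normalized number of all cyclations, `binom(2n, n) / 4 ^ n ∼ (π n) ^ (-1/2)`, yields
the claim.
-/

open Filter Topology
open scoped Finset Nat

section Pairings

open Equiv (swap)

section

variable {α : Type*} {E : Set α} {μ : Equiv.Perm α}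

/-- `μ` matches the points of `E` in pairs. It fixes all other points, so that the pairings on the
various subsets of `α` live in one group. -/
def IsPairingOn (E : Set α) (μ : Equiv.Perm α) : Prop :=
  μ * μ = 1 ∧ ∀ a, μ a = a ↔ a ∉ E

theorem IsPairingOn.apply_apply (h : IsPairingOn E μ) (a : α) : μ (μ a) = a :=
  Equiv.congr_fun h.1 a

theorem IsPairingOn.conj (h : IsPairingOn E μ) {σ : Equiv.Perm α} (hσ : σ * σ = 1) :
    IsPairingOn (σ ⁻¹' E) (σ * μ * σ) := by
  have hσσ (a : α) : σ (σ a) = a := Equiv.congr_fun hσ a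
  refine ⟨Equiv.ext fun a => ?_, fun a => ?_⟩
  · simp only [Equiv.Perm.mul_apply, hσσ, h.apply_apply, Equiv.Perm.one_apply]
  · rw [Set.mem_preimage, ← h.2, ← σ.apply_eq_iff_eq (x := μ (σ a)), hσσ]
    rfl

variable [DecidableEq α] {x y : α}

theorem IsPairingOn.swap_mul (h : IsPairingOn E μ) (hxy : x ≠ y) (hx : x ∉ E) (hy : y ∉ E) :
    IsPairingOn (insert x (insert y E)) (swap x y * μ) := by
  have hμx := (h.2 x).2 hx
  have hμy := (h.2 y).2 hy
  have hcomm : μ * swap x y = swap x y * μ := by rw [Equiv.mul_swap_eq_swap_mul, hμx, hμy]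
  refine ⟨?_, fun a => ?_⟩
  · rw [mul_assoc, ← mul_assoc μ, hcomm, mul_assoc, h.1, mul_one, Equiv.swap_mul_self]
  · have ha := h.2 a
    have := h.apply_apply a
    rw [Equiv.Perm.mul_apply, Equiv.swap_apply_def]
    grind

theorem IsPairingOn.swap_mul_of_apply_eq (h : IsPairingOn E μ) (hx : x ∈ E) (hxy : μ x = y) :
    IsPairingOn (E \ {x, y}) (swap x y * μ) := by
  have hyx : μ y = x := hxy ▸ h.apply_apply x
  have : x ≠ y := fun hxy' => (h.2 x).1 (hxy.trans hxy'.symm) hx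
  have hcomm : μ * swap x y = swap x y * μ := by
    rw [Equiv.mul_swap_eq_swap_mul, hxy, hyx, Equiv.swap_comm]
  refine ⟨?_, fun a => ?_⟩
  · rw [mul_assoc, ← mul_assoc μ, hcomm, mul_assoc, h.1, mul_one, Equiv.swap_mul_self]
  · have ha := h.2 a
    have := h.apply_apply a
    have := h.2 y
    rw [Equiv.Perm.mul_apply, Equiv.swap_apply_def]
    grind

end

variable {I : Type*}

/-- The permutations of the endpoints that preserve the union of the intervals in `S`, where
`(i, false)` and `(i, true)` are the two endpoints of the interval `i`. It contains a pairing of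
the endpoints exactly when `S` is a union of cycles of that pairing. -/
def intervalStabilizer (S : Finset I) : Subgroup (Equiv.Perm (I × Bool)) where
  carrier := {μ | ∀ a, (μ a).1 ∈ S ↔ a.1 ∈ S}
  mul_mem' hμ hν a := (hμ _).trans (hν a)
  one_mem' _ := Iff.rfl
  inv_mem' {μ} hμ a := by simpa using (hμ (μ⁻¹ a)).symm

/-- Every cycle of the pairing `μ` of the endpoints of the intervals in `A` weighs more than `k`,
where a cycle weighs the sum of the weights `w i` of its intervals. -/
def CyclesHeavierThan (k : ℕ) (w : I → ℕ) (A : Finset I) (μ : Equiv.Perm (I × Bool)) : Prop :=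
  ∀ S ⊆ A, S.Nonempty → μ ∈ intervalStabilizer S → k < ∑ i ∈ S, w i

variable [DecidableEq I]

theorem swap_mem_intervalStabilizer {S : Finset I} {x y : I × Bool} (h : x.1 ∈ S ↔ y.1 ∈ S) :
    swap x y ∈ intervalStabilizer S := by
  intro a
  rw [Equiv.swap_apply_def]
  split_ifs with hx hy
  · rw [hx, h]
  · rw [hy, h]
  · rfl

/-- The pairing obtained from a pairing `ν` by inserting the interval `i`: it joins `(i, false)` to
`y` and, if `y ≠ (i, true)`, joins `(i, true)` to the former partner of `y`. -/
def attachInterval (i : I) (y : I × Bool) (ν : Equiv.Perm (I × Bool)) : Equiv.Perm (I × Bool) :=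
  swap (i, false) y * (swap y (i, true) * ν * swap y (i, true))

/-- The inverse of `attachInterval i y`. -/
def detachInterval (i : I) (y : I × Bool) (μ : Equiv.Perm (I × Bool)) : Equiv.Perm (I × Bool) :=
  swap y (i, true) * (swap (i, false) y * μ) * swap y (i, true)

variable {A S : Finset I} {i : I} {y : I × Bool} {ν μ : Equiv.Perm (I × Bool)}

theorem detachInterval_attachInterval :
    detachInterval i y (attachInterval i y ν) = ν := by
  simp only [detachInterval, attachInterval, mul_assoc, Equiv.swap_mul_self_mul,
    Equiv.swap_mul_self, mul_one]

theorem attachInterval_detachInterval :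
    attachInterval i y (detachInterval i y μ) = μ := by
  simp only [detachInterval, attachInterval, mul_assoc, Equiv.swap_mul_self_mul,
    Equiv.swap_mul_self, mul_one]

theorem swap_preimage_endpoints_erase (hi : i ∈ A) (hy : y.1 ∈ A) (hyi : y ≠ (i, false)) :
    swap y (i, true) ⁻¹' {a | a.1 ∈ A.erase i} = {a | a.1 ∈ A} \ {(i, false), y} := by
  obtain ⟨l, c⟩ := y
  ext ⟨j, b⟩
  rw [Set.mem_preimage, Equiv.swap_apply_def]
  cases b <;> cases c <;> grind

theorem isPairingOn_attachInterval (hi : i ∈ A) (hy : y.1 ∈ A) (hyi : y ≠ (i, false))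
    (h : IsPairingOn {a | a.1 ∈ A.erase i} ν) :
    IsPairingOn {a | a.1 ∈ A} (attachInterval i y ν) := by
  have hpair := h.conj (Equiv.swap_mul_self y (i, true))
  rw [swap_preimage_endpoints_erase hi hy hyi] at hpair
  convert hpair.swap_mul hyi.symm (by simp) (by simp) using 1
  · ext a
    simp only [Set.mem_insert_iff, Set.mem_sdiff, Set.mem_ofPred_eq, Set.mem_singleton_iff]
    grind
  · rfl

theorem isPairingOn_detachInterval (hi : i ∈ A) (hy : y.1 ∈ A) (hyi : y ≠ (i, false))
    (h : IsPairingOn {a | a.1 ∈ A} μ) (hμ : μ (i, false) = y) :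
    IsPairingOn {a | a.1 ∈ A.erase i} (detachInterval i y μ) := by
  have hpair := (h.swap_mul_of_apply_eq hi hμ).conj (Equiv.swap_mul_self y (i, true))
  rw [← swap_preimage_endpoints_erase hi hy hyi, ← Set.preimage_comp] at hpair
  have hid : swap y (i, true) ∘ swap y (i, true) = id :=
    funext fun _ => Equiv.swap_apply_self _ _ _
  rwa [hid, Set.preimage_id] at hpair

theorem attachInterval_apply (hyi : y ≠ (i, false))
    (h : IsPairingOn {a | a.1 ∈ A.erase i} ν) : attachInterval i y ν (i, false) = y := by
  have hfix : ν (i, false) = (i, false) := (h.2 _).2 (by simp)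
  have hswap : swap y (i, true) (i, false) = (i, false) :=
    Equiv.swap_apply_of_ne_of_ne hyi.symm (by simp)
  simp only [attachInterval, Equiv.Perm.mul_apply, hswap, hfix, Equiv.swap_apply_left]

theorem attachInterval_mem_intervalStabilizer_iff (h : IsPairingOn {a | a.1 ∈ A.erase i} ν)
    (hS : i ∈ S ↔ y.1 ∈ S) :
    attachInterval i y ν ∈ intervalStabilizer S ↔ ν ∈ intervalStabilizer (S.erase i) := by
  have hswap : swap y (i, true) ∈ intervalStabilizer S := swap_mem_intervalStabilizer hS.symm
  rw [attachInterval, Subgroup.mul_mem_cancel_left _ (swap_mem_intervalStabilizer hS),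
    Subgroup.mul_mem_cancel_right _ hswap, Subgroup.mul_mem_cancel_left _ hswap]
  refine forall_congr' fun a => ?_
  have hi (b : Bool) : ν (i, b) = (i, b) := (h.2 _).2 (by simp)
  by_cases ha : a.1 = i
  · obtain ⟨j, b⟩ := a
    obtain rfl : j = i := ha
    simp [hi]
  · have hνa : (ν a).1 ≠ i := fun hνa => ha <| by
      rw [← h.apply_apply a, ← Prod.mk.eta (p := ν a), hνa, hi]
    simp [ha, hνa]

theorem cyclesHeavierThan_attachInterval_self {k : ℕ} {w : I → ℕ} (hi : i ∈ A)
    (h : IsPairingOn {a | a.1 ∈ A.erase i} ν) :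
    CyclesHeavierThan k w A (attachInterval i (i, true) ν) ↔
      k < w i ∧ CyclesHeavierThan k w (A.erase i) ν := by
  have hstab (S : Finset I) := attachInterval_mem_intervalStabilizer_iff (S := S)
    (y := (i, true)) h Iff.rfl
  refine ⟨fun H => ⟨?_, fun S hSA hne hS => ?_⟩, fun ⟨hwi, H⟩ S hSA hne hS => ?_⟩
  · refine (H {i} (by simpa) (by simp) ((hstab _).2 ?_)).trans_eq (by simp)
    simp [intervalStabilizer]
  · have hiS : i ∉ S := fun hiS => by simpa using hSA hiS
    refine H S (hSA.trans (Finset.erase_subset _ _)) hne ((hstab S).2 ?_)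
    rwa [Finset.erase_eq_of_notMem hiS]
  · by_cases hiS : i ∈ S
    · exact hwi.trans_le (Finset.single_le_sum_of_canonicallyOrdered hiS)
    · rw [hstab, Finset.erase_eq_of_notMem hiS] at hS
      exact H S (Finset.subset_erase.2 ⟨hSA, hiS⟩) hne hS

theorem sum_erase_update_add {w : I → ℕ} {j : I} (hij : i ≠ j) (hS : i ∈ S ↔ j ∈ S) :
    ∑ l ∈ S.erase i, Function.update w j (w j + w i) l = ∑ l ∈ S, w l := by
  by_cases hi : i ∈ S
  · rw [Finset.sum_update_of_mem (by simp [hij.symm, hS.1 hi]), ← Finset.add_sum_erase S w hi,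
      ← Finset.add_sum_erase (S.erase i) w (by simp [hij.symm, hS.1 hi] : j ∈ S.erase i),
      Finset.sdiff_singleton_eq_erase]
    ring
  · rw [Finset.erase_eq_of_notMem hi]
    exact Finset.sum_update_of_notMem (by rwa [← hS]) _ _

theorem cyclesHeavierThan_attachInterval_of_mem_erase {k : ℕ} {w : I → ℕ} (hi : i ∈ A)
    (hy : y.1 ∈ A.erase i) (h : IsPairingOn {a | a.1 ∈ A.erase i} ν) :
    CyclesHeavierThan k w A (attachInterval i y ν) ↔
      CyclesHeavierThan k (Function.update w y.1 (w y.1 + w i)) (A.erase i) ν := by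
  have hyi := Finset.ne_of_mem_erase hy
  have happly := attachInterval_apply (ne_of_apply_ne Prod.fst hyi) h
  refine ⟨fun H S hSA hne hS => ?_, fun H S hSA hne hS => ?_⟩
  · have hiS : i ∉ S := fun hiS => by simpa using hSA hiS
    obtain ⟨T, hTA, hT, hTi, rfl⟩ : ∃ T ⊆ A, T.Nonempty ∧ (i ∈ T ↔ y.1 ∈ T) ∧ T.erase i = S := by
      by_cases hyS : y.1 ∈ S
      · exact ⟨insert i S, Finset.insert_subset hi (hSA.trans (Finset.erase_subset _ _)),
          by simp, by simp [hyS], Finset.erase_insert hiS⟩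
      · exact ⟨S, hSA.trans (Finset.erase_subset _ _), hne, by simp [hyS, hiS],
          Finset.erase_eq_of_notMem hiS⟩
    rw [sum_erase_update_add hyi.symm hTi]
    exact H T hTA hT ((attachInterval_mem_intervalStabilizer_iff h hTi).2 hS)
  · have hiS : i ∈ S ↔ y.1 ∈ S := by simpa only [happly] using (hS (i, false)).symm
    rw [← sum_erase_update_add hyi.symm hiS]
    refine H _ (Finset.erase_subset_erase _ hSA) ?_
      ((attachInterval_mem_intervalStabilizer_iff h hiS).1 hS)
    obtain ⟨j, hj⟩ := hne
    by_cases hji : j = i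
    · exact ⟨y.1, Finset.mem_erase.2 ⟨hyi, hiS.1 (hji ▸ hj)⟩⟩
    · exact ⟨j, Finset.mem_erase.2 ⟨hji, hj⟩⟩

variable [Fintype I]

/-- The pairings of the endpoints of the intervals in `A` all of whose cycles weigh more than
`k`. -/
noncomputable def heavyPairings (k : ℕ) (w : I → ℕ) (A : Finset I) :
    Finset (Equiv.Perm (I × Bool)) :=
  open Classical in {μ | IsPairingOn {a | a.1 ∈ A} μ ∧ CyclesHeavierThan k w A μ}

theorem mem_heavyPairings {k : ℕ} {w : I → ℕ} :
    μ ∈ heavyPairings k w A ↔ IsPairingOn {a | a.1 ∈ A} μ ∧ CyclesHeavierThan k w A μ := by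
  simp only [heavyPairings, Finset.mem_filter_univ]

theorem heavyPairings_empty (k : ℕ) (w : I → ℕ) : heavyPairings k w ∅ = {1} := by
  ext μ
  rw [mem_heavyPairings, Finset.mem_singleton]
  refine ⟨fun h => Equiv.ext fun a => (h.1.2 a).2 (by simp), ?_⟩
  rintro rfl
  exact ⟨⟨mul_one 1, by simp⟩, fun S hS hne => absurd (Finset.subset_empty.1 hS) hne.ne_empty⟩

open scoped Classical in
theorem card_filter_heavyPairings_apply_eq {k : ℕ} {w : I → ℕ} (hi : i ∈ A) (hy : y.1 ∈ A)
    (hyi : y ≠ (i, false)) :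
    #{μ ∈ heavyPairings k w A | μ (i, false) = y} =
      #{ν | IsPairingOn {a | a.1 ∈ A.erase i} ν ∧
        CyclesHeavierThan k w A (attachInterval i y ν)} := by
  refine Finset.card_nbij' (detachInterval i y) (attachInterval i y) (fun μ hμ => ?_)
    (fun ν hν => ?_) (fun _ _ => attachInterval_detachInterval)
    (fun _ _ => detachInterval_attachInterval)
  · obtain ⟨hμA, hμy⟩ := Finset.mem_filter.1 hμ
    obtain ⟨hpair, hheavy⟩ := mem_heavyPairings.1 hμA
    rw [← attachInterval_detachInterval (i := i) (y := y) (μ := μ)] at hheavy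
    exact Finset.mem_filter_univ _ |>.2 ⟨isPairingOn_detachInterval hi hy hyi hpair hμy, hheavy⟩
  · obtain ⟨hpair, hheavy⟩ := Finset.mem_filter_univ _ |>.1 hν
    exact Finset.mem_filter.2 ⟨mem_heavyPairings.2
      ⟨isPairingOn_attachInterval hi hy hyi hpair, hheavy⟩, attachInterval_apply hyi hpair⟩

theorem card_filter_heavyPairings_apply_eq_self {k : ℕ} {w : I → ℕ} (hi : i ∈ A) :
    #{μ ∈ heavyPairings k w A | μ (i, false) = (i, true)} =
      if k < w i then #(heavyPairings k w (A.erase i)) else 0 := by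
  classical
  rw [card_filter_heavyPairings_apply_eq hi hi (by simp)]
  split_ifs with hwi
  · congr 1
    ext ν
    rw [Finset.mem_filter_univ, mem_heavyPairings]
    refine and_congr_right fun h => ?_
    rw [cyclesHeavierThan_attachInterval_self hi h, and_iff_right hwi]
  · refine Finset.card_eq_zero.2 (Finset.filter_eq_empty_iff.2 fun ν _ ⟨h, hheavy⟩ => hwi ?_)
    exact ((cyclesHeavierThan_attachInterval_self hi h).1 hheavy).1

theorem card_filter_heavyPairings_apply_eq_of_mem_erase {k : ℕ} {w : I → ℕ} (hi : i ∈ A)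
    (hy : y.1 ∈ A.erase i) :
    #{μ ∈ heavyPairings k w A | μ (i, false) = y} =
      #(heavyPairings k (Function.update w y.1 (w y.1 + w i)) (A.erase i)) := by
  classical
  obtain ⟨hyi, hyA⟩ := Finset.mem_erase.1 hy
  rw [card_filter_heavyPairings_apply_eq hi hyA (ne_of_apply_ne Prod.fst hyi)]
  congr 1
  ext ν
  rw [Finset.mem_filter_univ, mem_heavyPairings]
  exact and_congr_right fun h => cyclesHeavierThan_attachInterval_of_mem_erase hi hy h

theorem card_heavyPairings_eq_sum {k : ℕ} {w : I → ℕ} (hi : i ∈ A) :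
    #(heavyPairings k w A) = (if k < w i then #(heavyPairings k w (A.erase i)) else 0) +
      ∑ j ∈ A.erase i, 2 * #(heavyPairings k (Function.update w j (w j + w i)) (A.erase i)) := by
  have hmaps : ∀ μ ∈ heavyPairings k w A,
      μ (i, false) ∈ insert (i, true) (A.erase i ×ˢ (Finset.univ : Finset Bool)) := by
    intro μ hμ
    obtain ⟨h, -⟩ := mem_heavyPairings.1 hμ
    have hne : μ (i, false) ≠ (i, false) := fun heq => (h.2 _).1 heq hi
    have hmem : (μ (i, false)).1 ∈ A := by
      by_contra hnot
      exact hne (μ.injective ((h.2 _).2 hnot))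
    generalize μ (i, false) = y at hne hmem
    obtain ⟨j, b⟩ := y
    rw [Finset.mem_insert, Finset.mem_product, Finset.mem_erase]
    cases b <;> grind
  rw [Finset.card_eq_sum_card_fiberwise hmaps, Finset.sum_insert (by simp),
    card_filter_heavyPairings_apply_eq_self hi, Finset.sum_product]
  congr 1
  refine Finset.sum_congr rfl fun j hj => ?_
  simp only [card_filter_heavyPairings_apply_eq_of_mem_erase hi (y := (j, _)) hj, Finset.sum_const,
    Finset.card_univ, Fintype.card_bool, smul_eq_mul]

/-- The number of pairings of the endpoints of `n` intervals, one of weight `w` and the others of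
weight `1`, all of whose cycles weigh more than `k`. The weight is irrelevant for `n = 0`. -/
def numHeavyPairings (k : ℕ) : ℕ → ℕ → ℕ
  | 0, _ => 1
  | n + 1, w => (if k < w then numHeavyPairings k n 1 else 0) +
      2 * n * numHeavyPairings k n (w + 1)

theorem card_heavyPairings {k : ℕ} {n : ℕ} {A : Finset I} {w : I → ℕ} {i : I} (hA : #A = n)
    (hi : A.Nonempty → i ∈ A) (hw : ∀ j ∈ A.erase i, w j = 1) :
    #(heavyPairings k w A) = numHeavyPairings k n (w i) := by
  induction n generalizing A w i with
  | zero => rw [Finset.card_eq_zero.1 hA, heavyPairings_empty, Finset.card_singleton]; rfl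
  | succ n ih =>
    replace hi : i ∈ A := hi (Finset.card_pos.1 (by omega))
    have hAi : #(A.erase i) = n := by rw [Finset.card_erase_of_mem hi, hA, Nat.add_sub_cancel]
    have hself : #(heavyPairings k w (A.erase i)) = numHeavyPairings k n 1 := by
      obtain hempty | ⟨j, hj⟩ := (A.erase i).eq_empty_or_nonempty
      · rw [ih hAi (i := i) (by simp [hempty]) (by simp [hempty]), ← hAi, hempty]; rfl
      · rw [ih hAi (fun _ => hj) fun l hl => hw l (Finset.mem_of_mem_erase hl), hw j hj]
    have hother : ∀ j ∈ A.erase i, #(heavyPairings k (Function.update w j (w j + w i))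
        (A.erase i)) = numHeavyPairings k n (w i + 1) := by
      intro j hj
      rw [ih hAi (fun _ => hj), Function.update_self, hw j hj, add_comm]
      intro l hl
      obtain ⟨hlj, hl⟩ := Finset.mem_erase.1 hl
      rw [Function.update_of_ne hlj, hw l hl]
    rw [card_heavyPairings_eq_sum hi, hself, Finset.sum_congr rfl fun j hj => by rw [hother j hj],
      Finset.sum_const, hAi, numHeavyPairings, smul_eq_mul]
    ring

end Pairings

section Cyclations

/-- The bijection sending the endpoints `(m, false)` and `(m, true)` of the `m`-th interval to `2m`
and `2m + 1`. -/
def endpointEquiv (n : ℕ) : Fin n × Bool ≃ Fin (2 * n) where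
  toFun a := ⟨2 * a.1 + a.2.toNat, by have := a.2.toNat_lt; omega⟩
  invFun x := (⟨x / 2, by omega⟩, decide (x.1 % 2 = 1))
  left_inv := by
    rintro ⟨m, _ | _⟩ <;> ext <;> simp
    omega
  right_inv x := by
    ext
    obtain h | h := Nat.mod_two_eq_zero_or_one x.1 <;> simp [h] <;> omega

theorem intervalPerm_endpointEquiv {n : ℕ} (m : Fin n) (b : Bool) :
    intervalPerm n (endpointEquiv n (m, b)) = endpointEquiv n (m, !b) := by
  apply Fin.ext
  change (if (2 * m.1 + b.toNat) % 2 = 0 then _ else _) = 2 * m.1 + (!b).toNat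
  cases b <;> simp [endpointEquiv]

/-- The matching of a cyclation, as a permutation of the endpoints of the intervals. -/
def endpointPerm {n : ℕ} (c : Cyclation n) : Equiv.Perm (Fin n × Bool) :=
  (endpointEquiv n).symm.permCongr c.1

variable {n : ℕ} {c : Cyclation n}

theorem endpointEquiv_endpointPerm (a : Fin n × Bool) :
    endpointEquiv n (endpointPerm c a) = c.1 (endpointEquiv n a) := by
  simp [endpointPerm, Equiv.permCongr_apply]

theorem mem_of_mem_orbit {S : Finset (Fin n)} (hS : endpointPerm c ∈ intervalStabilizer S)
    {a a' : Fin n × Bool} (ha : a.1 ∈ S)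
    (ha' : endpointEquiv n a' ∈ MulAction.orbit (cycGroup c) (endpointEquiv n a)) : a'.1 ∈ S := by
  have hle : cycGroup c ≤
      (intervalStabilizer S).comap (endpointEquiv n).symm.permCongrHom.toMonoidHom := by
    rw [cycGroup, Subgroup.closure_le]
    rintro g (rfl | rfl)
    · exact hS
    · rintro ⟨m, b⟩
      simp [Equiv.permCongr_apply, intervalPerm_endpointEquiv]
  obtain ⟨g, hg⟩ := ha'
  rw [← (endpointEquiv n).symm_apply_eq] at hg
  rw [← hg]
  exact (hle g.2 a).2 ha

theorem apply_mem_orbit_iff {g : Equiv.Perm (Fin (2 * n))} (hg : g ∈ cycGroup c)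
    {x y : Fin (2 * n)} :
    g y ∈ MulAction.orbit (cycGroup c) x ↔ y ∈ MulAction.orbit (cycGroup c) x := by
  rw [← MulAction.orbit_eq_iff, ← MulAction.orbit_eq_iff]
  exact Eq.congr_left (MulAction.orbit_smul (⟨g, hg⟩ : cycGroup c) y)

theorem ncard_endpoints (S : Finset (Fin n)) :
    (endpointEquiv n '' {a | a.1 ∈ S}).ncard = 2 * #S := by
  rw [Set.ncard_image_of_injective _ (endpointEquiv n).injective]
  have hset : {a : Fin n × Bool | a.1 ∈ S} = ↑(S ×ˢ (Finset.univ : Finset Bool)) := by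
    ext a; simp
  rw [hset, Set.ncard_coe_finset, Finset.card_product, Finset.card_univ, Fintype.card_bool,
    mul_comm]

theorem exists_mem_intervalStabilizer (c : Cyclation n) (x : Fin (2 * n)) :
    ∃ S : Finset (Fin n), S.Nonempty ∧ endpointPerm c ∈ intervalStabilizer S ∧
      (MulAction.orbit (cycGroup c) x).ncard = 2 * #S := by
  classical
  let S : Finset (Fin n) := {m | endpointEquiv n (m, false) ∈ MulAction.orbit (cycGroup c) x}
  have hmem (a : Fin n × Bool) :
      a.1 ∈ S ↔ endpointEquiv n a ∈ MulAction.orbit (cycGroup c) x := by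
    obtain ⟨m, b⟩ := a
    rw [Finset.mem_filter_univ]
    cases b
    · rfl
    · rw [← apply_mem_orbit_iff (Subgroup.subset_closure (Or.inr rfl)), intervalPerm_endpointEquiv]
      rfl
  refine ⟨S, ⟨((endpointEquiv n).symm x).1, ?_⟩, fun a => ?_, ?_⟩
  · rw [hmem, Equiv.apply_symm_apply]
    exact MulAction.mem_orbit_self x
  · rw [hmem, hmem, endpointEquiv_endpointPerm,
      apply_mem_orbit_iff (Subgroup.subset_closure (Or.inl rfl))]
  · rw [← ncard_endpoints]
    congr 1
    ext y
    rw [(endpointEquiv n).image_eq_preimage_symm, Set.mem_preimage, Set.mem_ofPred_eq, hmem,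
      Equiv.apply_symm_apply]

theorem lt_shortestCycle_iff (hn : 0 < n) (k : ℕ) :
    k < shortestCycle c ↔ CyclesHeavierThan k 1 Finset.univ (endpointPerm c) := by
  simp only [CyclesHeavierThan, Pi.one_apply, Finset.sum_const, smul_eq_mul, mul_one]
  refine ⟨fun h S _ ⟨m, hm⟩ hS => ?_, fun h => ?_⟩
  · set O := MulAction.orbit (cycGroup c) (endpointEquiv n (m, false))
    have hsub : O ⊆ endpointEquiv n '' {a | a.1 ∈ S} := by
      intro y hy
      obtain ⟨a, rfl⟩ := (endpointEquiv n).surjective y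
      exact ⟨a, mem_of_mem_orbit hS hm hy, rfl⟩
    have hcard := (Set.ncard_le_ncard hsub).trans_eq (ncard_endpoints S)
    have hle : shortestCycle c ≤ O.ncard / 2 := Nat.sInf_le ⟨_, rfl⟩
    omega
  · obtain ⟨x, hx : _ / 2 = shortestCycle c⟩ := Nat.sInf_mem (s := Set.range fun x : Fin (2 * n) =>
      (MulAction.orbit (cycGroup c) x).ncard / 2) ⟨_, ⟨0, by omega⟩, rfl⟩
    obtain ⟨S, hne, hS, hcard⟩ := exists_mem_intervalStabilizer c x
    rw [← hx, hcard, Nat.mul_div_cancel_left _ two_pos]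
    exact h S (Finset.subset_univ S) hne hS

theorem isPairingOn_permCongr_iff {ν : Equiv.Perm (Fin (2 * n))} :
    IsPairingOn {a | a.1 ∈ (Finset.univ : Finset (Fin n))} ((endpointEquiv n).symm.permCongr ν) ↔
      (∀ x, ν x ≠ x) ∧ ν * ν = 1 := by
  rw [IsPairingOn, and_comm, ← Equiv.permCongr_mul]
  refine and_congr ?_ ((endpointEquiv n).symm.permCongrHom.map_eq_one_iff)
  simp only [Finset.mem_univ, Set.ofPred_true, Set.mem_univ, not_true_eq_false, iff_false,
    Equiv.permCongr_apply, Equiv.symm_symm, Equiv.symm_apply_eq]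
  exact (endpointEquiv n).forall_congr fun _ => Iff.rfl

theorem card_filter_lt_shortestCycle (hn : 0 < n) (k : ℕ) :
    #{c : Cyclation n | k < shortestCycle c} = numHeavyPairings k n 1 := by
  have hcard : #(heavyPairings k 1 Finset.univ) = numHeavyPairings k n 1 :=
    card_heavyPairings (i := (⟨0, hn⟩ : Fin n)) (by simp) (by simp) (by simp)
  rw [← hcard]
  refine Finset.card_nbij endpointPerm (fun c hc => ?_) (fun c _ c' _ h => ?_) fun μ hμ => ?_
  · exact mem_heavyPairings.2 ⟨isPairingOn_permCongr_iff.2 c.2,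
      (lt_shortestCycle_iff hn k).1 (Finset.mem_filter.1 hc).2⟩
  · exact Subtype.ext ((endpointEquiv n).symm.permCongr.injective h)
  · obtain ⟨hpair, hheavy⟩ := mem_heavyPairings.1 hμ
    obtain ⟨ν, rfl⟩ := (endpointEquiv n).symm.permCongr.surjective μ
    refine ⟨⟨ν, isPairingOn_permCongr_iff.1 hpair⟩, ?_, rfl⟩
    exact Finset.mem_filter.2 ⟨Finset.mem_univ _, (lt_shortestCycle_iff hn k).2 hheavy⟩

theorem card_cyclation (hn : 0 < n) : Fintype.card (Cyclation n) = numHeavyPairings 0 n 1 := by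
  rw [← card_filter_lt_shortestCycle hn, ← Finset.card_univ, eq_comm, Finset.card_filter_eq_iff]
  exact fun c _ => (lt_shortestCycle_iff hn 0).2 fun S _ hS _ =>
    Finset.sum_pos (fun _ _ => one_pos) hS

theorem shortestCycle_le (hn : 0 < n) (c : Cyclation n) : shortestCycle c ≤ n := by
  by_contra! h
  simpa using (lt_shortestCycle_iff hn n).1 h Finset.univ subset_rfl
    ⟨⟨0, hn⟩, Finset.mem_univ _⟩ fun a => by simp

theorem sum_shortestCycle (hn : 0 < n) :
    ∑ c : Cyclation n, shortestCycle c = ∑ k ∈ Finset.range n, numHeavyPairings k n 1 := by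
  have hlayer (c : Cyclation n) :
      shortestCycle c = ∑ k ∈ Finset.range n, if k < shortestCycle c then 1 else 0 := by
    have hle := shortestCycle_le hn c
    rw [Finset.sum_boole, Nat.cast_id]
    conv_lhs => rw [← Finset.card_range (shortestCycle c)]
    congr 1
    ext k
    simp only [Finset.mem_range, Finset.mem_filter]
    omega
  rw [Finset.sum_congr rfl fun c _ => hlayer c, Finset.sum_comm]
  exact Finset.sum_congr rfl fun k _ => by
    rw [← card_filter_lt_shortestCycle hn, Finset.card_filter]

end Cyclations

section HeavyCoeff

/-- The number of pairings of `n` intervals all of whose cycles are longer than `k`, divided by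
`2 ^ n * n!`. These are the coefficients of the generating function `heavyGF k`. -/
noncomputable def heavyCoeff (k n : ℕ) : ℝ :=
  numHeavyPairings k n 1 / (2 ^ n * n !)

theorem numHeavyPairings_one (k n : ℕ) :
    (numHeavyPairings k n 1 : ℝ) = 2 ^ n * n ! * heavyCoeff k n := by
  rw [heavyCoeff]
  field_simp

theorem heavyCoeff_zero (k : ℕ) : heavyCoeff k 0 = 1 := by simp [heavyCoeff, numHeavyPairings]

theorem heavyCoeff_nonneg (k n : ℕ) : 0 ≤ heavyCoeff k n := by
  rw [heavyCoeff]
  positivity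

theorem numHeavyPairings_succ_eq_sum (k n w : ℕ) :
    (numHeavyPairings k (n + 1) w : ℝ) =
      2 ^ n * n ! * ∑ j ∈ Finset.range (n + 1 - (k + 1 - w)), heavyCoeff k j := by
  induction n generalizing w with
  | zero =>
    obtain h | h := lt_or_ge k w
    · simp [numHeavyPairings, heavyCoeff_zero, h, Nat.sub_eq_zero_of_le (Nat.succ_le_of_lt h)]
    · have hrange : 0 + 1 - (k + 1 - w) = 0 := by omega
      simp [numHeavyPairings, hrange, h.not_gt]
  | succ n ih =>
    rw [numHeavyPairings, Nat.cast_add, Nat.cast_mul, ih, Nat.factorial_succ]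
    obtain h | h := lt_or_ge k w
    · have hrange : n + 1 + 1 - (k + 1 - w) = n + 1 + 1 := by omega
      have hrange' : n + 1 - (k + 1 - (w + 1)) = n + 1 := by omega
      rw [hrange, hrange', Finset.sum_range_succ _ (n + 1), if_pos h, numHeavyPairings_one,
        Nat.factorial_succ]
      push_cast
      ring
    · have hrange : n + 1 + 1 - (k + 1 - w) = n + 1 - (k + 1 - (w + 1)) := by omega
      rw [hrange, if_neg h.not_gt]
      push_cast
      ring

theorem heavyCoeff_succ (k n : ℕ) :
    2 * ((n : ℝ) + 1) * heavyCoeff k (n + 1) = ∑ j ∈ Finset.range (n + 1 - k), heavyCoeff k j := by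
  rw [heavyCoeff, numHeavyPairings_succ_eq_sum, Nat.factorial_succ, Nat.add_sub_cancel]
  push_cast
  field_simp
  ring

theorem heavyCoeff_succ_sub (k n : ℕ) :
    2 * ((n : ℝ) + 1) * heavyCoeff k (n + 1) - 2 * n * heavyCoeff k n =
      if k ≤ n then heavyCoeff k (n - k) else 0 := by
  rw [heavyCoeff_succ]
  cases n with
  | zero => cases k <;> simp
  | succ n =>
    rw [Nat.cast_succ, heavyCoeff_succ]
    split_ifs with h
    · rw [Nat.succ_sub h, Finset.sum_range_succ, add_sub_cancel_left]
    · have hrange : n + 1 + 1 - k = n + 1 - k := by omega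
      rw [hrange, sub_self]

theorem heavyCoeff_le_one (k n : ℕ) : heavyCoeff k n ≤ 1 := by
  induction n using Nat.strong_induction_on with
  | _ n ih =>
    cases n with
    | zero => exact (heavyCoeff_zero k).le
    | succ n =>
      have hsum : ∑ j ∈ Finset.range (n + 1 - k), heavyCoeff k j ≤ (n + 1 - k : ℕ) :=
        (Finset.sum_le_sum fun j hj =>
          ih j ((Finset.mem_range.1 hj).trans_le (Nat.sub_le _ _))).trans_eq (by simp)
      have hcast : ((n + 1 - k : ℕ) : ℝ) ≤ n + 1 := by exact_mod_cast Nat.sub_le _ _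
      rw [← heavyCoeff_succ] at hsum
      nlinarith

theorem natCast_mul_heavyCoeff_self (n : ℕ) : (n : ℝ) * heavyCoeff n n = 0 := by
  cases n with
  | zero => simp
  | succ n =>
    have h := heavyCoeff_succ (n + 1) n
    rw [Nat.sub_self, Finset.sum_range_zero, mul_assoc] at h
    exact_mod_cast (mul_eq_zero.1 h).resolve_left two_ne_zero

theorem heavyCoeff_zero_left (n : ℕ) : heavyCoeff 0 n = n.centralBinom / 4 ^ n := by
  induction n with
  | zero => simp [heavyCoeff_zero]
  | succ n ih =>
    have hrec := heavyCoeff_succ_sub 0 n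
    have hbinom : ((n : ℝ) + 1) * (n + 1).centralBinom = 2 * (2 * n + 1) * n.centralBinom := by
      exact_mod_cast Nat.succ_mul_centralBinom_succ n
    rw [if_pos n.zero_le, Nat.sub_zero, ih] at hrec
    have hn : (n : ℝ) + 1 ≠ 0 := by positivity
    rw [eq_div_iff (by positivity), ← mul_right_inj' hn, hbinom]
    field_simp at hrec
    rw [pow_succ]
    linear_combination 2 * hrec

theorem expected_shortestCycle {n : ℕ} (hn : 0 < n) :
    ExT n = (∑ k ∈ Finset.range n, heavyCoeff k n) / heavyCoeff 0 n := by
  have hne : (2 : ℝ) ^ n * n ! ≠ 0 := by positivity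
  rw [ExT, card_cyclation hn, ← Nat.cast_sum, sum_shortestCycle hn, numHeavyPairings_one,
    Nat.cast_sum, Finset.sum_congr rfl fun k _ => numHeavyPairings_one k n, ← Finset.mul_sum,
    mul_div_mul_left _ _ hne]

theorem tendsto_inv_heavyCoeff_zero_mul_sqrt :
    Tendsto (fun n : ℕ => (heavyCoeff 0 n * √n)⁻¹) atTop (𝓝 √Real.pi) := by
  have hlim : Tendsto (fun n : ℕ => (2 : ℝ) + 1 / n) atTop (𝓝 (2 + 0)) :=
    tendsto_const_nhds.add tendsto_one_div_atTop_nhds_zero_nat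
  have hsqrt := (Real.Wallis.tendsto_W_nhds_pi_div_two.mul hlim).sqrt
  rw [add_zero, div_mul_cancel₀ _ two_ne_zero] at hsqrt
  refine hsqrt.congr' ?_
  filter_upwards [eventually_gt_atTop 0] with n hn
  have hcentral : (n.centralBinom : ℝ) * n ! * n ! = (2 * n)! := by
    have h := Nat.choose_mul_factorial_mul_factorial (show n ≤ 2 * n by omega)
    rw [two_mul, Nat.add_sub_cancel, ← two_mul] at h
    exact_mod_cast h
  have hpow : (2 : ℝ) ^ (4 * n) = (4 ^ n) ^ 2 := by
    rw [← pow_mul, pow_mul 2 4 n, mul_comm n, pow_mul]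
    norm_num
  have hbinom : (0 : ℝ) < n.centralBinom := by exact_mod_cast n.centralBinom_pos
  rw [heavyCoeff_zero_left, Real.Wallis.W_eq_factorial_ratio, ← hcentral,
    Real.sqrt_eq_iff_mul_self_eq (by positivity) (by positivity), ← sq, inv_pow,
    mul_pow _ √(n : ℝ), Real.sq_sqrt (by positivity), hpow]
  field_simp

end HeavyCoeff

section PowerSeries

variable {𝕜 : Type*} [RCLike 𝕜] {a : ℕ → 𝕜} {C : ℝ} {z : 𝕜}

theorem summable_mul_pow_of_norm_le (ha : ∀ n, ‖a n‖ ≤ C) (hz : ‖z‖ < 1) :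
    Summable fun n => a n * z ^ n := by
  refine .of_norm_bounded ((summable_geometric_of_lt_one (norm_nonneg z) hz).mul_left C) fun n => ?_
  rw [norm_mul, norm_pow]
  exact mul_le_mul_of_nonneg_right (ha n) (by positivity)

theorem summable_succ_mul_pow {r : ℝ} (hr₀ : 0 ≤ r) (hr : r < 1) :
    Summable fun n : ℕ => ((n : ℝ) + 1) * r ^ n := by
  have hlin := summable_pow_mul_geometric_of_norm_lt_one 1 ((Real.norm_of_nonneg hr₀).trans_lt hr)
  simpa only [pow_one, add_mul, one_mul] using hlin.add (summable_geometric_of_lt_one hr₀ hr)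

theorem summable_deriv_mul_pow_of_norm_le (ha : ∀ n, ‖a n‖ ≤ C) (hz : ‖z‖ < 1) :
    Summable fun n : ℕ => ((n : 𝕜) + 1) * a (n + 1) * z ^ n := by
  refine .of_norm_bounded ((summable_succ_mul_pow (norm_nonneg z) hz).mul_left C) fun n => ?_
  have hcast : ‖(n : 𝕜) + 1‖ = n + 1 := by exact_mod_cast RCLike.norm_natCast (K := 𝕜) (n + 1)
  rw [norm_mul, norm_mul, norm_pow, hcast, mul_comm ((n : ℝ) + 1), mul_assoc]
  exact mul_le_mul_of_nonneg_right (ha _) (by positivity)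

theorem hasDerivAt_tsum_mul_pow (ha : ∀ n, ‖a n‖ ≤ C) (hz : ‖z‖ < 1) :
    HasDerivAt (fun z => ∑' n, a n * z ^ n) (∑' n : ℕ, ((n : 𝕜) + 1) * a (n + 1) * z ^ n) z := by
  obtain ⟨r, hzr, hr⟩ := exists_between hz
  have hr₀ : 0 ≤ r := (norm_nonneg z).trans hzr.le
  have hbound : Summable fun n : ℕ => C * (n * r ^ (n - 1)) :=
    ((summable_nat_add_iff 1).1 (by simpa using summable_succ_mul_pow hr₀ hr)).mul_left C
  have hterm : ∀ n : ℕ, ∀ y ∈ Metric.ball (0 : 𝕜) r,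
      ‖a n * ((n : 𝕜) * y ^ (n - 1))‖ ≤ C * (n * r ^ (n - 1)) := fun n y hy => by
    rw [norm_mul, norm_mul, norm_pow, RCLike.norm_natCast]
    gcongr
    · exact (norm_nonneg _).trans (ha n)
    · exact ha n
    · exact (mem_ball_zero_iff.1 hy).le
  have hderiv := hasDerivAt_tsum_of_isPreconnected hbound Metric.isOpen_ball
    (convex_ball (0 : 𝕜) r).isPreconnected (fun n y _ => (hasDerivAt_pow n y).const_mul (a n))
    hterm (mem_ball_zero_iff.2 hzr) (summable_mul_pow_of_norm_le ha hz) (mem_ball_zero_iff.2 hzr)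
  have hsummable := Summable.of_norm_bounded hbound fun n => hterm n z (mem_ball_zero_iff.2 hzr)
  refine hderiv.congr_deriv (hsummable.tsum_eq_zero_add.trans ?_)
  simp only [Nat.cast_zero, zero_mul, mul_zero, zero_add, Nat.cast_succ, Nat.add_sub_cancel]
  exact tsum_congr fun n => by ring

end PowerSeries

section HeavyGF

variable {z : ℝ}

/-- The generating function `∑ₙ heavyCoeff k n * z ^ n`. -/
noncomputable def heavyGF (k : ℕ) (z : ℝ) : ℝ := ∑' n, heavyCoeff k n * z ^ n

/-- Half of the tail `∑ z ^ l / l` over `l > k` of the series of `-log (1 - z)`, in closed form. -/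
noncomputable def halfLogTail (k : ℕ) (z : ℝ) : ℝ :=
  (-Real.log (1 - z) - ∑ l ∈ Finset.range k, z ^ (l + 1) / (l + 1)) / 2

theorem norm_heavyCoeff_le_one (k n : ℕ) : ‖heavyCoeff k n‖ ≤ 1 := by
  rw [Real.norm_of_nonneg (heavyCoeff_nonneg k n)]
  exact heavyCoeff_le_one k n

theorem hasSum_heavyGF (k : ℕ) (hz : |z| < 1) :
    HasSum (fun n => heavyCoeff k n * z ^ n) (heavyGF k z) :=
  (summable_mul_pow_of_norm_le (norm_heavyCoeff_le_one k) hz).hasSum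

theorem hasSum_shift_heavyGF (k : ℕ) (hz : |z| < 1) :
    HasSum (fun n => (if k ≤ n then heavyCoeff k (n - k) else 0) * z ^ n)
      (z ^ k * heavyGF k z) := by
  have hhead : ∑ i ∈ Finset.range k, (if k ≤ i then heavyCoeff k (i - k) else 0) * z ^ i = 0 :=
    Finset.sum_eq_zero fun i hi => by rw [if_neg (Finset.mem_range.1 hi).not_ge, zero_mul]
  rw [← hasSum_nat_add_iff' k, hhead, sub_zero]
  refine ((hasSum_heavyGF k hz).mul_left (z ^ k)).congr_fun fun n => ?_
  rw [if_pos (Nat.le_add_left k n), Nat.add_sub_cancel, pow_add]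
  ring

theorem hasDerivAt_heavyGF (k : ℕ) (hz : |z| < 1) :
    HasDerivAt (heavyGF k) (z ^ k / (2 * (1 - z)) * heavyGF k z) z := by
  refine (hasDerivAt_tsum_mul_pow (norm_heavyCoeff_le_one k) hz).congr_deriv ?_
  have hsum := (summable_deriv_mul_pow_of_norm_le (norm_heavyCoeff_le_one k) hz).hasSum
  set D := ∑' n : ℕ, ((n : ℝ) + 1) * heavyCoeff k (n + 1) * z ^ n
  have hsum_mul : HasSum (fun n : ℕ => n * heavyCoeff k n * z ^ n) (z * D) := by
    rw [← hasSum_nat_add_iff' 1, Finset.sum_range_one, Nat.cast_zero, zero_mul, zero_mul, sub_zero]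
    refine (hsum.mul_left z).congr_fun fun n => ?_
    push_cast
    ring
  have hode : 2 * D - 2 * (z * D) = z ^ k * heavyGF k z := by
    refine ((hsum.mul_left 2).sub (hsum_mul.mul_left 2)).unique
      ((hasSum_shift_heavyGF k hz).congr_fun fun n => ?_)
    rw [← heavyCoeff_succ_sub]
    ring
  have hz₁ : 2 * (1 - z) ≠ 0 := by linarith [(abs_lt.1 hz).2]
  rw [div_mul_eq_mul_div, eq_div_iff hz₁, ← hode]
  ring

theorem hasDerivAt_halfLogTail (k : ℕ) (hz : z ≠ 1) :
    HasDerivAt (halfLogTail k) (z ^ k / (2 * (1 - z))) z := by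
  have hz₁ : 1 - z ≠ 0 := sub_ne_zero.2 hz.symm
  have hlog : HasDerivAt (fun z : ℝ => Real.log (1 - z)) (-1 / (1 - z)) z :=
    ((hasDerivAt_id z).const_sub 1).log hz₁
  have hpoly : HasDerivAt (fun z : ℝ => ∑ l ∈ Finset.range k, z ^ (l + 1) / ((l : ℝ) + 1))
      (∑ l ∈ Finset.range k, z ^ l) z := by
    refine HasDerivAt.fun_sum fun l _ => ((hasDerivAt_pow (l + 1) z).div_const _).congr_deriv ?_
    push_cast
    field_simp
  refine ((hlog.neg.sub hpoly).div_const 2).congr_deriv ?_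
  rw [geom_sum_eq hz, ← neg_div_neg_eq (z ^ k - 1), neg_sub, neg_sub]
  field_simp
  ring

theorem heavyGF_eq_exp (k : ℕ) (hz : |z| < 1) : heavyGF k z = Real.exp (halfLogTail k z) := by
  have hderiv : ∀ y ∈ Metric.ball (0 : ℝ) 1,
      HasDerivAt (fun y => heavyGF k y * Real.exp (-halfLogTail k y)) 0 y := fun y hy => by
    have hy : |y| < 1 := mem_ball_zero_iff.1 hy
    refine ((hasDerivAt_heavyGF k hy).mul
      (hasDerivAt_halfLogTail k (abs_lt.1 hy).2.ne).neg.exp).congr_deriv ?_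
    ring
  have hconst := Metric.isOpen_ball.is_const_of_deriv_eq_zero (convex_ball (0 : ℝ) 1).isPreconnected
    (fun y hy => (hderiv y hy).differentiableAt.differentiableWithinAt)
    (fun y hy => (hderiv y hy).deriv) (mem_ball_zero_iff.2 hz) (Metric.mem_ball_self one_pos)
  have hGF : heavyGF k 0 = 1 := by
    rw [heavyGF, tsum_eq_single 0 fun n hn => by rw [zero_pow hn, mul_zero], heavyCoeff_zero,
      pow_zero, one_mul]
  have hlog : halfLogTail k 0 = 0 := by simp [halfLogTail]
  rwa [hGF, hlog, neg_zero, Real.exp_zero, one_mul, Real.exp_neg, mul_inv_eq_one₀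
    (Real.exp_ne_zero _)] at hconst

end HeavyGF

section Tauberian

variable {d : ℕ → ℝ} {g : ℝ → ℝ} {L c s : ℝ}

theorem exp_neg_natCast_mul_mem_Icc (hs : 0 ≤ s) (n : ℕ) : Real.exp (-(n * s)) ∈ Set.Icc 0 1 :=
  ⟨(Real.exp_pos _).le, Real.exp_le_one_iff.2 (neg_nonpos.2 (by positivity))⟩

/-- The mean of `d` at scale `1 / s` against the weight `e ^ (-n s) * g (e ^ (-n s))`. Polynomials
`g` are handled by rescaling `s`, and `g t = 1 / t` cut off at `t = 1 / e` gives Cesàro means. -/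
noncomputable def abelMean (d : ℕ → ℝ) (g : ℝ → ℝ) (s : ℝ) : ℝ :=
  s * ∑' n, d n * (Real.exp (-(n * s)) * g (Real.exp (-(n * s))))

theorem abelMean_neg (d : ℕ → ℝ) (g : ℝ → ℝ) (s : ℝ) : abelMean d (-g) s = -abelMean d g s := by
  simp only [abelMean, Pi.neg_apply, mul_neg, tsum_neg]

theorem summable_abelMean (hd : ∀ n, 0 ≤ d n) (hs : 0 < s)
    (hsum : Summable fun n : ℕ => d n * Real.exp (-(n * s)))
    (hg : ContinuousOn g (Set.Icc 0 1)) :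
    Summable fun n : ℕ => d n * (Real.exp (-(n * s)) * g (Real.exp (-(n * s)))) := by
  obtain ⟨C, hC⟩ := isCompact_Icc.exists_bound_of_continuousOn hg
  refine .of_norm_bounded (hsum.mul_right C) fun n => ?_
  have hpos : 0 ≤ d n * Real.exp (-(n * s)) := mul_nonneg (hd n) (Real.exp_pos _).le
  rw [← mul_assoc, norm_mul, Real.norm_of_nonneg hpos]
  exact mul_le_mul_of_nonneg_left (hC _ (exp_neg_natCast_mul_mem_Icc hs.le n)) hpos

theorem abelMean_mono {f : ℝ → ℝ} (hd : ∀ n, 0 ≤ d n) (hs : 0 < s)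
    (hsum : Summable fun n : ℕ => d n * Real.exp (-(n * s)))
    (hf : ContinuousOn f (Set.Icc 0 1)) (hg : ContinuousOn g (Set.Icc 0 1))
    (hfg : ∀ t ∈ Set.Icc (0 : ℝ) 1, f t ≤ g t) : abelMean d f s ≤ abelMean d g s :=
  mul_le_mul_of_nonneg_left ((summable_abelMean hd hs hsum hf).tsum_le_tsum
    (fun n => mul_le_mul_of_nonneg_left (mul_le_mul_of_nonneg_left
      (hfg _ (exp_neg_natCast_mul_mem_Icc hs.le n)) (Real.exp_pos _).le) (hd n))
    (summable_abelMean hd hs hsum hg)) hs.le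

theorem abelMean_monomial (d : ℕ → ℝ) (j : ℕ) (a s : ℝ) :
    abelMean d (fun t => a * t ^ j) s =
      a / (j + 1) * ((j + 1) * s * ∑' n : ℕ, d n * Real.exp (-(n * ((j + 1) * s)))) := by
  have hterm : ∀ n : ℕ, d n * (Real.exp (-(n * s)) * (a * Real.exp (-(n * s)) ^ j)) =
      a * (d n * Real.exp (-(n * ((j + 1) * s)))) := fun n => by
    rw [← Real.exp_nat_mul, mul_left_comm (Real.exp _), ← Real.exp_add]
    ring_nf
  rw [abelMean, tsum_congr hterm, tsum_mul_left, ← mul_assoc, ← mul_assoc]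
  congr 1
  field_simp

theorem tendsto_abelMean_polynomial (hd : ∀ n, 0 ≤ d n)
    (hsum : ∀ s : ℝ, 0 < s → Summable fun n : ℕ => d n * Real.exp (-(n * s)))
    (hL : Tendsto (fun s : ℝ => s * ∑' n : ℕ, d n * Real.exp (-(n * s))) (𝓝[>] 0) (𝓝 L))
    (p : Polynomial ℝ) :
    Tendsto (abelMean d fun t => p.eval t) (𝓝[>] 0) (𝓝 (L * ∫ t in (0 : ℝ)..1, p.eval t)) := by
  induction p using Polynomial.induction_on' with
  | add p q hp hq =>
    simp only [Polynomial.eval_add]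
    rw [intervalIntegral.integral_add (p.continuous.intervalIntegrable _ _)
      (q.continuous.intervalIntegrable _ _), mul_add]
    refine (hp.add hq).congr' ?_
    filter_upwards [self_mem_nhdsWithin] with s hs
    simp only [abelMean, mul_add]
    rw [← mul_add, (summable_abelMean hd hs (hsum s hs) p.continuousOn).tsum_add
      (summable_abelMean hd hs (hsum s hs) q.continuousOn)]
  | monomial j a =>
    have hscale : Tendsto (fun s : ℝ => (j + 1) * s) (𝓝[>] 0) (𝓝[>] 0) :=
      tendsto_nhdsWithin_iff.2 ⟨((continuous_const_mul ((j : ℝ) + 1)).tendsto' 0 0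
        (mul_zero _)).mono_left nhdsWithin_le_nhds, by
        filter_upwards [self_mem_nhdsWithin] with s hs
        exact Set.mem_Ioi.2 (mul_pos (by positivity) hs)⟩
    have hint : L * ∫ t in (0 : ℝ)..1, a * t ^ j = a / (j + 1) * L := by
      rw [intervalIntegral.integral_const_mul, integral_pow, one_pow, zero_pow j.succ_ne_zero]
      ring
    simp only [Polynomial.eval_monomial]
    rw [hint]
    exact ((hL.comp hscale).const_mul _).congr fun s => (abelMean_monomial d j a s).symm

theorem limit_abelMean_nonneg (hd : ∀ n, 0 ≤ d n)
    (hL : Tendsto (fun s : ℝ => s * ∑' n : ℕ, d n * Real.exp (-(n * s))) (𝓝[>] 0) (𝓝 L)) :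
    0 ≤ L := by
  refine ge_of_tendsto hL ?_
  filter_upwards [self_mem_nhdsWithin] with s hs
  exact mul_nonneg (le_of_lt hs) (tsum_nonneg fun n => mul_nonneg (hd n) (Real.exp_pos _).le)

theorem eventually_lt_abelMean (hd : ∀ n, 0 ≤ d n)
    (hsum : ∀ s : ℝ, 0 < s → Summable fun n : ℕ => d n * Real.exp (-(n * s)))
    (hL : Tendsto (fun s : ℝ => s * ∑' n : ℕ, d n * Real.exp (-(n * s))) (𝓝[>] 0) (𝓝 L))
    (hg : ContinuousOn g (Set.Icc 0 1)) (hc : c < L * ∫ t in (0 : ℝ)..1, g t) :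
    ∀ᶠ s in 𝓝[>] 0, c < abelMean d g s := by
  obtain ⟨ε, hε, hcε⟩ : ∃ ε > 0, c < L * ((∫ t in (0 : ℝ)..1, g t) - 2 * ε) :=
    ((Continuous.tendsto' (by fun_prop) 0 _
      (by rw [mul_zero, sub_zero])).eventually_const_lt hc).exists_gt
  obtain ⟨p, hp⟩ := exists_polynomial_near_of_continuousOn 0 1 g hg ε hε
  set q := p - Polynomial.C ε
  have hq : ∀ t, q.eval t = p.eval t - ε := fun t => by
    rw [Polynomial.eval_sub, Polynomial.eval_C]
  have hintg : IntervalIntegrable g MeasureTheory.volume 0 1 :=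
    hg.intervalIntegrable_of_Icc zero_le_one
  have hintq : (∫ t in (0 : ℝ)..1, g t) - 2 * ε ≤ ∫ t in (0 : ℝ)..1, q.eval t := by
    calc (∫ t in (0 : ℝ)..1, g t) - 2 * ε = ∫ t in (0 : ℝ)..1, (g t - 2 * ε) := by
          rw [intervalIntegral.integral_sub hintg intervalIntegrable_const]
          simp
      _ ≤ _ := by
          refine intervalIntegral.integral_mono_on zero_le_one
            (hintg.sub intervalIntegrable_const) (q.continuous.intervalIntegrable _ _)
            fun t ht => ?_
          linarith [hq t, (abs_lt.1 (hp t ht)).1]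
  have hlt := hcε.trans_le (mul_le_mul_of_nonneg_left hintq (limit_abelMean_nonneg hd hL))
  filter_upwards [(tendsto_abelMean_polynomial hd hsum hL q).eventually_const_lt hlt,
    self_mem_nhdsWithin] with s hlt hs
  refine hlt.trans_le (abelMean_mono hd hs (hsum s hs) q.continuousOn hg fun t ht => ?_)
  linarith [hq t, (abs_lt.1 (hp t ht)).2]

theorem tendsto_abelMean (hd : ∀ n, 0 ≤ d n)
    (hsum : ∀ s : ℝ, 0 < s → Summable fun n : ℕ => d n * Real.exp (-(n * s)))
    (hL : Tendsto (fun s : ℝ => s * ∑' n : ℕ, d n * Real.exp (-(n * s))) (𝓝[>] 0) (𝓝 L))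
    (hg : ContinuousOn g (Set.Icc 0 1)) :
    Tendsto (abelMean d g) (𝓝[>] 0) (𝓝 (L * ∫ t in (0 : ℝ)..1, g t)) := by
  refine tendsto_order.2 ⟨fun c hc => eventually_lt_abelMean hd hsum hL hg hc, fun c hc => ?_⟩
  have hneg : -c < L * ∫ t in (0 : ℝ)..1, (-g) t := by
    rw [show (∫ t in (0 : ℝ)..1, (-g) t) = _ from intervalIntegral.integral_neg, mul_neg]
    exact neg_lt_neg hc
  filter_upwards [eventually_lt_abelMean hd hsum hL hg.neg hneg] with s hlt
  rwa [abelMean_neg, neg_lt_neg_iff] at hlt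

theorem abelMean_one_div_le {N : ℕ} (hN : 0 < N) (hd : ∀ n, 0 ≤ d n)
    (hsum : Summable fun n : ℕ => d n * Real.exp (-(n * (1 / N : ℝ))))
    (hg : ContinuousOn g (Set.Icc 0 1)) (hzero : ∀ t ≤ Real.exp (-1), g t ≤ 0)
    (hinv : ∀ t, Real.exp (-1) ≤ t → g t ≤ t⁻¹) :
    abelMean d g (1 / N) ≤ (∑ n ∈ Finset.range N, d n) / N := by
  have hN : (0 : ℝ) < N := by exact_mod_cast hN
  rw [abelMean, ← one_div_mul_eq_div _ (∑ n ∈ Finset.range N, d n),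
    ← (summable_abelMean hd (by positivity) hsum hg).sum_add_tsum_nat_add N]
  refine mul_le_mul_of_nonneg_left (add_le_of_le_of_nonpos (Finset.sum_le_sum fun n hn => ?_)
    (tsum_nonpos fun n => ?_)) (by positivity)
  · refine mul_le_of_le_one_right (hd n) ((le_inv_mul_iff₀ (Real.exp_pos _)).1 ?_)
    rw [mul_one]
    refine hinv _ (Real.exp_le_exp.2 (neg_le_neg ?_))
    rw [mul_one_div, div_le_one hN]
    exact_mod_cast (Finset.mem_range.1 hn).le
  · refine mul_nonpos_of_nonneg_of_nonpos (hd _)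
      (mul_nonpos_of_nonneg_of_nonpos (Real.exp_pos _).le
        (hzero _ (Real.exp_le_exp.2 (neg_le_neg ?_))))
    rw [mul_one_div, one_le_div hN]
    exact_mod_cast Nat.le_add_left N n

theorem le_abelMean_one_div {N : ℕ} (hN : 0 < N) (hd : ∀ n, 0 ≤ d n)
    (hsum : Summable fun n : ℕ => d n * Real.exp (-(n * (1 / N : ℝ))))
    (hg : ContinuousOn g (Set.Icc 0 1)) (hnonneg : ∀ t, 0 ≤ g t)
    (hinv : ∀ t, Real.exp (-1) ≤ t → t⁻¹ ≤ g t) :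
    (∑ n ∈ Finset.range N, d n) / N ≤ abelMean d g (1 / N) := by
  have hN : (0 : ℝ) < N := by exact_mod_cast hN
  rw [abelMean, ← one_div_mul_eq_div _ (∑ n ∈ Finset.range N, d n)]
  refine mul_le_mul_of_nonneg_left ((Finset.sum_le_sum fun n hn => ?_).trans
    ((summable_abelMean hd (by positivity) hsum hg).sum_le_tsum _ fun n _ =>
      mul_nonneg (hd n) (mul_nonneg (Real.exp_pos _).le (hnonneg _)))) (by positivity)
  refine le_mul_of_one_le_right (hd n) ((inv_mul_le_iff₀ (Real.exp_pos _)).1 ?_)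
  rw [mul_one]
  refine hinv _ (Real.exp_le_exp.2 (neg_le_neg ?_))
  rw [mul_one_div, div_le_one hN]
  exact_mod_cast (Finset.mem_range.1 hn).le

/-- A continuous cut-off of `t ↦ 1 / t`: it vanishes for `t ≤ b` and equals `1 / t` for `a ≤ t`. -/
noncomputable def rampInv (b a t : ℝ) : ℝ := (max t b)⁻¹ * max 0 (min 1 ((t - b) / (a - b)))

variable {a b t : ℝ}

theorem continuous_rampInv (hb : 0 < b) : Continuous (rampInv b a) :=
  (Continuous.inv₀ (by fun_prop) fun _ => (hb.trans_le (le_max_right _ _)).ne').mul (by fun_prop)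

theorem rampInv_nonneg (hb : 0 < b) : 0 ≤ rampInv b a t :=
  mul_nonneg (inv_nonneg.2 (hb.le.trans (le_max_right _ _))) (le_max_left _ _)

theorem rampInv_of_le (hab : b < a) (ht : t ≤ b) : rampInv b a t = 0 := by
  have hdiv : (t - b) / (a - b) ≤ 0 :=
    div_nonpos_of_nonpos_of_nonneg (sub_nonpos.2 ht) (sub_pos.2 hab).le
  rw [rampInv, max_eq_left ((min_le_right _ _).trans hdiv), mul_zero]

theorem rampInv_le_inv (hb : 0 < b) (ht : b ≤ t) : rampInv b a t ≤ t⁻¹ := by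
  rw [rampInv, max_eq_left ht]
  exact mul_le_of_le_one_right (inv_nonneg.2 (hb.le.trans ht))
    (max_le zero_le_one (min_le_left _ _))

theorem rampInv_of_ge (hab : b < a) (ht : a ≤ t) : rampInv b a t = t⁻¹ := by
  have hdiv : 1 ≤ (t - b) / (a - b) := by
    rw [one_le_div (sub_pos.2 hab)]
    exact sub_le_sub_right ht b
  rw [rampInv, max_eq_left (hab.le.trans ht), min_eq_left hdiv, max_eq_right zero_le_one, mul_one]

theorem integral_rampInv_le (hb : 0 < b) (hab : b < a) (hb₁ : b ≤ 1) :
    ∫ t in (0 : ℝ)..1, rampInv b a t ≤ -Real.log b := by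
  have hcont : Continuous (rampInv b a) := continuous_rampInv hb
  have hzero : ∫ t in (0 : ℝ)..b, rampInv b a t = 0 :=
    intervalIntegral.integral_zero_ae (.of_forall fun t ht => rampInv_of_le hab
      (by rw [Set.uIoc_of_le hb.le] at ht; exact ht.2))
  rw [← intervalIntegral.integral_add_adjacent_intervals (hcont.intervalIntegrable 0 b)
    (hcont.intervalIntegrable b 1), hzero, zero_add, ← Real.log_inv, inv_eq_one_div b,
    ← integral_inv_of_pos hb one_pos]
  exact intervalIntegral.integral_mono_on hb₁ (hcont.intervalIntegrable b 1)
    (intervalIntegral.intervalIntegrable_inv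
      (fun t ht => (hb.trans_le (Set.uIcc_of_le hb₁ ▸ ht).1).ne') continuousOn_id)
    fun t ht => rampInv_le_inv hb ht.1

theorem le_integral_rampInv (hb : 0 < b) (hab : b < a) (ha : a ≤ 1) :
    -Real.log a ≤ ∫ t in (0 : ℝ)..1, rampInv b a t := by
  have hcont : Continuous (rampInv b a) := continuous_rampInv hb
  have hnonneg : 0 ≤ ∫ t in (0 : ℝ)..a, rampInv b a t :=
    intervalIntegral.integral_nonneg (hb.trans hab).le fun t _ => rampInv_nonneg hb
  have hinv : ∫ t in a..1, rampInv b a t = ∫ t in a..1, t⁻¹ :=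
    intervalIntegral.integral_congr fun t ht => rampInv_of_ge hab (Set.uIcc_of_le ha ▸ ht).1
  rw [← intervalIntegral.integral_add_adjacent_intervals (hcont.intervalIntegrable 0 a)
    (hcont.intervalIntegrable a 1), hinv, integral_inv_of_pos (hb.trans hab) one_pos, one_div,
    Real.log_inv]
  exact le_add_of_nonneg_left hnonneg

theorem tendsto_sum_range_div_of_tendsto_mul_tsum_exp (hd : ∀ n, 0 ≤ d n)
    (hsum : ∀ s : ℝ, 0 < s → Summable fun n : ℕ => d n * Real.exp (-(n * s)))
    (hL : Tendsto (fun s : ℝ => s * ∑' n : ℕ, d n * Real.exp (-(n * s))) (𝓝[>] 0) (𝓝 L)) :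
    Tendsto (fun N : ℕ => (∑ n ∈ Finset.range N, d n) / N) atTop (𝓝 L) := by
  have hL₀ : 0 ≤ L := limit_abelMean_nonneg hd hL
  have hscale : Tendsto (fun N : ℕ => 1 / (N : ℝ)) atTop (𝓝[>] 0) := by
    simpa only [one_div, Function.comp_def] using
      tendsto_inv_atTop_nhdsGT_zero.comp (tendsto_natCast_atTop_atTop (R := ℝ))
  refine tendsto_order.2 ⟨fun c hc => ?_, fun c hc => ?_⟩
  · obtain ⟨ε, hε, hcε, hε₁⟩ : ∃ ε > 0, c < L * (1 - ε) ∧ ε ≤ 1 :=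
      (((Continuous.tendsto' (by fun_prop) 0 L (by ring)).eventually_const_lt hc).and
        (eventually_le_nhds one_pos)).exists_gt
    have hlt : Real.exp (-1) < Real.exp (-(1 - ε)) := Real.exp_lt_exp.2 (by linarith)
    have hint := le_integral_rampInv (Real.exp_pos _) hlt (Real.exp_le_one_iff.2 (by linarith))
    rw [Real.log_exp, neg_neg] at hint
    have hcont : Continuous (rampInv (Real.exp (-1)) (Real.exp (-(1 - ε)))) :=
      continuous_rampInv (Real.exp_pos _)
    filter_upwards [hscale.eventually (eventually_lt_abelMean hd hsum hL hcont.continuousOn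
      (hcε.trans_le (mul_le_mul_of_nonneg_left hint hL₀))), eventually_gt_atTop 0] with N hN hN₀
    exact hN.trans_le (abelMean_one_div_le hN₀ hd (hsum _ (by positivity)) hcont.continuousOn
      (fun t ht => (rampInv_of_le hlt ht).le) fun t ht => rampInv_le_inv (Real.exp_pos _) ht)
  · obtain ⟨ε, hε, hcε⟩ : ∃ ε > 0, L * (1 + ε) < c :=
      ((Continuous.tendsto' (by fun_prop) 0 L (by ring)).eventually_lt_const hc).exists_gt
    have hlt : Real.exp (-(1 + ε)) < Real.exp (-1) := Real.exp_lt_exp.2 (by linarith)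
    have hint := integral_rampInv_le (Real.exp_pos _) hlt (Real.exp_le_one_iff.2 (by linarith))
    rw [Real.log_exp, neg_neg] at hint
    have hcont : Continuous (rampInv (Real.exp (-(1 + ε))) (Real.exp (-1))) :=
      continuous_rampInv (Real.exp_pos _)
    filter_upwards [hscale.eventually ((tendsto_abelMean hd hsum hL
      hcont.continuousOn).eventually_lt_const ((mul_le_mul_of_nonneg_left hint hL₀).trans_lt hcε)),
      eventually_gt_atTop 0] with N hN hN₀
    exact (le_abelMean_one_div hN₀ hd (hsum _ (by positivity)) hcont.continuousOn
      (fun t => rampInv_nonneg (Real.exp_pos _)) fun t ht => (rampInv_of_ge hlt ht).ge).trans_lt hN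

end Tauberian

section RiemannSum

open MeasureTheory

variable {f : ℝ → ℝ} {s : ℝ} {N : ℕ}

theorem antitoneOn_comp_mul_left (hf : AntitoneOn f (Set.Ioi 0)) (hs : 0 < s) (hN : 0 < N) :
    AntitoneOn (fun x => f (s * x)) (Set.Ici (N : ℝ)) := by
  have hmem : ∀ x ∈ Set.Ici (N : ℝ), s * x ∈ Set.Ioi 0 := fun x hx =>
    mul_pos hs ((Nat.cast_pos.2 hN).trans_le hx)
  exact fun x hx y hy hxy =>
    hf (hmem x hx) (hmem y hy) (mul_le_mul_of_nonneg_left hxy hs.le)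

theorem nonneg_comp_mul_left (hnonneg : ∀ x ∈ Set.Ioi 0, 0 ≤ f x) (hs : 0 < s) (N : ℕ) :
    ∀ x ∈ Set.Ioi (N : ℝ), 0 ≤ f (s * x) := fun _ hx =>
  hnonneg _ (mul_pos hs (N.cast_nonneg.trans_lt hx))

theorem summable_comp_mul_natCast (hf : AntitoneOn f (Set.Ioi 0))
    (hnonneg : ∀ x ∈ Set.Ioi 0, 0 ≤ f x) (hs : 0 < s) (hN : 0 < N)
    (hint : IntegrableOn f (Set.Ioi (s * N))) : Summable fun n : ℕ => f (s * n) :=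
  (antitoneOn_comp_mul_left hf hs hN).summable_of_integrableOn_Ioi
    ((integrableOn_Ioi_comp_mul_left_iff f N hs).2 hint) (nonneg_comp_mul_left hnonneg hs N)

theorem mul_tsum_le_setIntegral_Ioi (hf : AntitoneOn f (Set.Ioi 0))
    (hnonneg : ∀ x ∈ Set.Ioi 0, 0 ≤ f x) (hs : 0 < s) (hN : 0 < N)
    (hint : IntegrableOn f (Set.Ioi (s * N))) :
    s * ∑' n : ℕ, f (s * (n + N + 1 : ℕ)) ≤ ∫ x in Set.Ioi (s * N), f x := by
  rw [← integral_comp_mul_left_Ioi' f N hs]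
  exact mul_le_mul_of_nonneg_left ((antitoneOn_comp_mul_left hf hs hN).tsum_comp_add_le_integral N
    ((integrableOn_Ioi_comp_mul_left_iff f N hs).2 hint) (nonneg_comp_mul_left hnonneg hs N)) hs.le

theorem setIntegral_Ioi_le_mul_tsum (hf : AntitoneOn f (Set.Ioi 0))
    (hnonneg : ∀ x ∈ Set.Ioi 0, 0 ≤ f x) (hs : 0 < s) (hN : 0 < N)
    (hint : IntegrableOn f (Set.Ioi (s * N))) :
    ∫ x in Set.Ioi (s * N), f x ≤ s * ∑' n : ℕ, f (s * (n + N : ℕ)) := by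
  rw [← integral_comp_mul_left_Ioi' f N hs]
  exact mul_le_mul_of_nonneg_left ((antitoneOn_comp_mul_left hf hs hN).integral_le_tsum_comp_add N
    (summable_comp_mul_natCast hf hnonneg hs hN hint) (nonneg_comp_mul_left hnonneg hs N)) hs.le

end RiemannSum

section ExponentialIntegral

open MeasureTheory

variable {k : ℕ} {s x z : ℝ}

theorem antitoneOn_exp_neg_div : AntitoneOn (fun y : ℝ => Real.exp (-y) / y) (Set.Ioi 0) :=
  fun _ hx _ _ hxy => div_le_div₀ (Real.exp_pos _).le (Real.exp_le_exp.2 (neg_le_neg hxy)) hx hxy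

theorem exp_neg_div_nonneg : ∀ y ∈ Set.Ioi (0 : ℝ), 0 ≤ Real.exp (-y) / y := fun _ hy =>
  div_nonneg (Real.exp_pos _).le (le_of_lt hy)

theorem integrableOn_exp_neg_div (hx : 0 < x) :
    IntegrableOn (fun y : ℝ => Real.exp (-y) / y) (Set.Ioi x) := by
  refine ((integrableOn_exp_neg_Ioi x).div_const x).mono'
    (Measurable.aestronglyMeasurable (by fun_prop))
    ((ae_restrict_iff' measurableSet_Ioi).2 (.of_forall fun y hy => ?_))
  rw [Real.norm_of_nonneg (exp_neg_div_nonneg y (hx.trans hy))]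
  exact div_le_div_of_nonneg_left (Real.exp_pos _).le hx (le_of_lt hy)

theorem antitoneOn_Efun : AntitoneOn Efun (Set.Ioi 0) := fun _ hx _ _ hxy =>
  setIntegral_mono_set (integrableOn_exp_neg_div hx)
    ((ae_restrict_iff' measurableSet_Ioi).2
      (.of_forall fun z hz => exp_neg_div_nonneg z ((Set.mem_Ioi.1 hx).trans hz)))
    (.of_forall (Set.Ioi_subset_Ioi hxy))

theorem hasSum_two_mul_halfLogTail (k : ℕ) (hs : 0 < s) :
    HasSum (fun l : ℕ => s * (Real.exp (-(s * (l + (k + 1) : ℕ))) / (s * (l + (k + 1) : ℕ))))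
      (2 * halfLogTail k (Real.exp (-s))) := by
  have hexp : |Real.exp (-s)| < 1 := by
    rw [abs_of_pos (Real.exp_pos _), Real.exp_lt_one_iff]
    exact neg_neg_of_pos hs
  have htail := (hasSum_nat_add_iff' k).2 (Real.hasSum_pow_div_log_of_abs_lt_one hexp)
  rw [halfLogTail, mul_div_cancel₀ _ two_ne_zero]
  refine htail.congr_fun fun l => ?_
  rw [← Real.exp_nat_mul]
  field_simp
  push_cast
  ring_nf

theorem Efun_le_two_mul_halfLogTail (k : ℕ) (hs : 0 < s) :
    Efun (s * (k + 1 : ℕ)) ≤ 2 * halfLogTail k (Real.exp (-s)) := by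
  rw [← (hasSum_two_mul_halfLogTail k hs).tsum_eq, tsum_mul_left]
  exact setIntegral_Ioi_le_mul_tsum antitoneOn_exp_neg_div exp_neg_div_nonneg hs k.succ_pos
    (integrableOn_exp_neg_div (by positivity))

theorem two_mul_halfLogTail_le_Efun (hk : 0 < k) (hs : 0 < s) :
    2 * halfLogTail k (Real.exp (-s)) ≤ Efun (s * k) := by
  rw [← (hasSum_two_mul_halfLogTail k hs).tsum_eq, tsum_mul_left]
  exact mul_tsum_le_setIntegral_Ioi antitoneOn_exp_neg_div exp_neg_div_nonneg hs hk
    (integrableOn_exp_neg_div (by positivity))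

theorem halfLogTail_le_zero_left (hz : 0 ≤ z) (k : ℕ) : halfLogTail k z ≤ halfLogTail 0 z := by
  rw [halfLogTail, halfLogTail, Finset.sum_range_zero]
  gcongr
  exact Finset.sum_nonneg fun l _ => by positivity

theorem halfLogTail_zero_exp_neg_le (hs : 0 < s) :
    halfLogTail 0 (Real.exp (-s)) ≤ (s - Real.log s) / 2 := by
  have hle : s * Real.exp (-s) ≤ 1 - Real.exp (-s) := by
    have hmul := mul_le_mul_of_nonneg_right (Real.add_one_le_exp s) (Real.exp_pos (-s)).le
    rw [← Real.exp_add, add_neg_cancel, Real.exp_zero] at hmul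
    linarith
  have hlog := Real.log_le_log (mul_pos hs (Real.exp_pos _)) hle
  rw [Real.log_mul hs.ne' (Real.exp_ne_zero _), Real.log_exp] at hlog
  rw [halfLogTail, Finset.sum_range_zero]
  linarith

theorem Efun_le_sub_log (hx : 0 < x) : Efun x ≤ x - Real.log x := by
  have hE := Efun_le_two_mul_halfLogTail 0 hx
  rw [zero_add, Nat.cast_one, mul_one] at hE
  linarith [halfLogTail_zero_exp_neg_le hx]

/-- The integrand `e ^ (E(x) / 2 - x)` of the limit constant. -/
noncomputable def limitIntegrand (x : ℝ) : ℝ := Real.exp (Efun x / 2 - x)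

theorem limitIntegrand_nonneg (x : ℝ) : 0 ≤ limitIntegrand x := (Real.exp_pos _).le

theorem antitoneOn_limitIntegrand : AntitoneOn limitIntegrand (Set.Ioi 0) :=
  fun x hx y hy hxy => Real.exp_le_exp.2 (by linarith [antitoneOn_Efun hx hy hxy])

theorem integrableOn_limitIntegrand : IntegrableOn limitIntegrand (Set.Ioi 0) := by
  have hbound := integrableOn_rpow_mul_exp_neg_mul_rpow (p := 1) (s := -1 / 2) (b := 1 / 2)
    (by norm_num) one_pos (by norm_num)
  refine hbound.mono'
    (aemeasurable_restrict_of_antitoneOn measurableSet_Ioi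
      antitoneOn_limitIntegrand).aestronglyMeasurable
    ((ae_restrict_iff' measurableSet_Ioi).2 (.of_forall fun x hx => ?_))
  rw [Real.norm_of_nonneg (limitIntegrand_nonneg x), Real.rpow_one, Real.rpow_def_of_pos hx,
    ← Real.exp_add, limitIntegrand]
  exact Real.exp_le_exp.2 (by linarith [Efun_le_sub_log hx])

end ExponentialIntegral

section DoubleSeries

theorem hasSum_sum_antidiagonal {M A : Type*} [AddCommMonoid M] [TopologicalSpace M]
    [ContinuousAdd M] [RegularSpace M] [AddMonoid A] [Finset.HasAntidiagonal A] {F : A × A → M}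
    {a : M} (hF : HasSum F a) :
    HasSum (fun n => ∑ p ∈ Finset.HasAntidiagonal.antidiagonal n, F p) a := by
  refine (Finset.HasAntidiagonal.sigmaAntidiagonalEquivProd.hasSum_iff.2 hF).sigma fun n => ?_
  rw [← Finset.sum_coe_sort]
  exact hasSum_fintype _

theorem hasSum_prod_of_nonneg {β γ : Type*} {F : β × γ → ℝ} {r : β → ℝ} (hF : 0 ≤ F)
    (hrow : ∀ b, HasSum (fun c => F (b, c)) (r b)) (hr : Summable r) : HasSum F (∑' b, r b) := by
  have hsummable : Summable F := (summable_prod_of_nonneg hF).2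
    ⟨fun b => (hrow b).summable, by simpa only [(hrow _).tsum_eq] using hr⟩
  rw [(hsummable.hasSum.prod_fiberwise hrow).tsum_eq]
  exact hsummable.hasSum

end DoubleSeries

section Limit

open MeasureTheory

variable {k : ℕ} {s z : ℝ}

/-- The increments of `n * ∑ k < n, heavyCoeff k n`. Their generating function is explicit because
`heavyCoeff k n` and `heavyCoeff k (n + 1)` differ by a multiple of `heavyCoeff k (n - k)`. -/
noncomputable def heavyDiagonal (n : ℕ) : ℝ :=
  (∑ p ∈ Finset.HasAntidiagonal.antidiagonal n, heavyCoeff p.1 p.2) / 2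

theorem heavyDiagonal_nonneg (n : ℕ) : 0 ≤ heavyDiagonal n :=
  div_nonneg (Finset.sum_nonneg fun _ _ => heavyCoeff_nonneg _ _) zero_le_two

theorem heavyDiagonal_eq_sub (n : ℕ) :
    heavyDiagonal n = ((n : ℝ) + 1) * ∑ k ∈ Finset.range (n + 1), heavyCoeff k (n + 1) -
      n * ∑ k ∈ Finset.range (n + 1), heavyCoeff k n := by
  rw [heavyDiagonal, Finset.Nat.sum_antidiagonal_eq_sum_range_succ heavyCoeff, Finset.mul_sum,
    Finset.mul_sum, ← Finset.sum_sub_distrib, Finset.sum_div]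
  refine Finset.sum_congr rfl fun k hk => ?_
  have hrec := heavyCoeff_succ_sub k n
  rw [if_pos (Finset.mem_range_succ_iff.1 hk)] at hrec
  linarith

theorem sum_range_heavyDiagonal (n : ℕ) :
    ∑ m ∈ Finset.range n, heavyDiagonal m = n * ∑ k ∈ Finset.range n, heavyCoeff k n := by
  induction n with
  | zero => simp
  | succ n ih =>
    rw [Finset.sum_range_succ, ih, heavyDiagonal_eq_sub, Finset.sum_range_succ (heavyCoeff · n),
      mul_add (n : ℝ), natCast_mul_heavyCoeff_self, Nat.cast_succ]
    ring

theorem summable_pow_mul_exp_halfLogTail (hz : 0 ≤ z) (hz₁ : z < 1) :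
    Summable fun k : ℕ => z ^ k * Real.exp (halfLogTail k z) := by
  refine .of_nonneg_of_le (fun k => by positivity) (fun k => ?_)
    ((summable_geometric_of_lt_one hz hz₁).mul_right (Real.exp (halfLogTail 0 z)))
  exact mul_le_mul_of_nonneg_left (Real.exp_le_exp.2 (halfLogTail_le_zero_left hz k))
    (by positivity)

theorem hasSum_heavyDiagonal (hz : 0 ≤ z) (hz₁ : z < 1) :
    HasSum (fun n => heavyDiagonal n * z ^ n)
      ((∑' k : ℕ, z ^ k * Real.exp (halfLogTail k z)) / 2) := by
  have hz_abs : |z| < 1 := by rwa [abs_of_nonneg hz]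
  have hrow : ∀ k, HasSum (fun n => heavyCoeff k n * z ^ (k + n))
      (z ^ k * Real.exp (halfLogTail k z)) := fun k => by
    rw [← heavyGF_eq_exp k hz_abs]
    refine ((hasSum_heavyGF k hz_abs).mul_left (z ^ k)).congr_fun fun n => ?_
    rw [pow_add, mul_left_comm]
  have hdouble := hasSum_prod_of_nonneg (F := fun p : ℕ × ℕ => heavyCoeff p.1 p.2 * z ^ (p.1 + p.2))
    (fun p => mul_nonneg (heavyCoeff_nonneg _ _) (by positivity)) hrow
    (summable_pow_mul_exp_halfLogTail hz hz₁)
  refine ((hasSum_sum_antidiagonal hdouble).div_const 2).congr_fun fun n => ?_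
  rw [heavyDiagonal, div_mul_eq_mul_div, Finset.sum_mul]
  congr 1
  exact Finset.sum_congr rfl fun p hp => by rw [Finset.HasAntidiagonal.mem_antidiagonal.1 hp]

theorem hasSum_heavyDiagonal_mul_exp (hs : 0 < s) :
    HasSum (fun n : ℕ => heavyDiagonal n * Real.exp (-(n * s)))
      ((∑' k : ℕ, Real.exp (-s) ^ k * Real.exp (halfLogTail k (Real.exp (-s)))) / 2) := by
  refine (hasSum_heavyDiagonal (Real.exp_pos (-s)).le
    (Real.exp_lt_one_iff.2 (neg_neg_of_pos hs))).congr_fun fun n => ?_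
  rw [← Real.exp_nat_mul, mul_neg]

theorem limitIntegrand_le_term (k : ℕ) (hs : 0 < s) :
    limitIntegrand (s * (k + 1 : ℕ)) ≤
      Real.exp (-s) ^ k * Real.exp (halfLogTail k (Real.exp (-s))) := by
  rw [limitIntegrand, ← Real.exp_nat_mul, ← Real.exp_add]
  have hE := Efun_le_two_mul_halfLogTail k hs
  refine Real.exp_le_exp.2 ?_
  push_cast at hE ⊢
  linarith

theorem term_le_limitIntegrand (hk : 0 < k) (hs : 0 < s) :
    Real.exp (-s) ^ k * Real.exp (halfLogTail k (Real.exp (-s))) ≤ limitIntegrand (s * k) := by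
  rw [limitIntegrand, ← Real.exp_nat_mul, ← Real.exp_add]
  exact Real.exp_le_exp.2 (by linarith [two_mul_halfLogTail_le_Efun hk hs])

theorem mul_term_le_sqrt_mul_exp (k : ℕ) (hs : 0 < s) :
    s * (Real.exp (-s) ^ k * Real.exp (halfLogTail k (Real.exp (-s)))) ≤ √s * Real.exp (s / 2) := by
  have hhead : Real.exp (halfLogTail k (Real.exp (-s))) ≤ Real.exp ((s - Real.log s) / 2) :=
    Real.exp_le_exp.2 ((halfLogTail_le_zero_left (Real.exp_pos _).le k).trans
      (halfLogTail_zero_exp_neg_le hs))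
  have hpow : Real.exp (-s) ^ k ≤ 1 :=
    pow_le_one₀ (Real.exp_pos _).le (Real.exp_le_one_iff.2 (neg_nonpos.2 hs.le))
  calc s * (Real.exp (-s) ^ k * Real.exp (halfLogTail k (Real.exp (-s))))
      ≤ s * (1 * Real.exp ((s - Real.log s) / 2)) := by gcongr
    _ = √s * Real.exp (s / 2) := by
      rw [one_mul, Real.sqrt_eq_rpow, Real.rpow_def_of_pos hs, ← Real.exp_add]
      nth_rewrite 1 [← Real.exp_log hs]
      rw [← Real.exp_add]
      ring_nf

theorem setIntegral_limitIntegrand_le (hs : 0 < s) :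
    ∫ x in Set.Ioi s, limitIntegrand x ≤
      s * ∑' k : ℕ, Real.exp (-s) ^ k * Real.exp (halfLogTail k (Real.exp (-s))) := by
  have hint : IntegrableOn limitIntegrand (Set.Ioi (s * (1 : ℕ))) :=
    integrableOn_limitIntegrand.mono_set (Set.Ioi_subset_Ioi (by positivity))
  have hriemann := setIntegral_Ioi_le_mul_tsum antitoneOn_limitIntegrand
    (fun x _ => limitIntegrand_nonneg x) hs one_pos hint
  have hsummable := (summable_nat_add_iff 1).2 (summable_comp_mul_natCast antitoneOn_limitIntegrand
    (fun x _ => limitIntegrand_nonneg x) hs one_pos hint)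
  rw [Nat.cast_one, mul_one] at hriemann
  exact hriemann.trans (mul_le_mul_of_nonneg_left (hsummable.tsum_le_tsum
    (fun k => limitIntegrand_le_term k hs) (summable_pow_mul_exp_halfLogTail (Real.exp_pos _).le
      (Real.exp_lt_one_iff.2 (neg_neg_of_pos hs)))) hs.le)

theorem le_setIntegral_limitIntegrand (hs : 0 < s) :
    s * ∑' k : ℕ, Real.exp (-s) ^ k * Real.exp (halfLogTail k (Real.exp (-s))) ≤
      2 * (√s * Real.exp (s / 2)) + ∫ x in Set.Ioi s, limitIntegrand x := by
  have hint : IntegrableOn limitIntegrand (Set.Ioi (s * (1 : ℕ))) :=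
    integrableOn_limitIntegrand.mono_set (Set.Ioi_subset_Ioi (by positivity))
  have hriemann := mul_tsum_le_setIntegral_Ioi antitoneOn_limitIntegrand
    (fun x _ => limitIntegrand_nonneg x) hs one_pos hint
  have hsummable := (summable_nat_add_iff 2).2 (summable_comp_mul_natCast antitoneOn_limitIntegrand
    (fun x _ => limitIntegrand_nonneg x) hs one_pos hint)
  have hterms := summable_pow_mul_exp_halfLogTail (Real.exp_pos (-s)).le
    (Real.exp_lt_one_iff.2 (neg_neg_of_pos hs))
  rw [Nat.cast_one, mul_one] at hriemann
  rw [← hterms.sum_add_tsum_nat_add 2, mul_add, Finset.mul_sum]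
  refine add_le_add ?_ (hriemann.trans' (mul_le_mul_of_nonneg_left
    (((summable_nat_add_iff 2).2 hterms).tsum_le_tsum
      (fun k => term_le_limitIntegrand (by positivity) hs) hsummable) hs.le))
  simpa using Finset.sum_le_card_nsmul (Finset.range 2) _ _ fun k _ => mul_term_le_sqrt_mul_exp k hs

theorem tendsto_setIntegral_limitIntegrand :
    Tendsto (fun s => ∫ x in Set.Ioi s, limitIntegrand x) (𝓝[>] 0)
      (𝓝 (∫ x in Set.Ioi 0, limitIntegrand x)) := by
  have hcover : AECover (volume.restrict (Set.Ioi (0 : ℝ))) (𝓝[>] 0) Set.Ioi :=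
    aecover_Ioi_of_Ioi (tendsto_id.mono_left nhdsWithin_le_nhds)
  refine (hcover.integral_tendsto_of_countably_generated integrableOn_limitIntegrand).congr' ?_
  filter_upwards [self_mem_nhdsWithin] with s hs
  rw [Measure.restrict_restrict measurableSet_Ioi,
    Set.inter_eq_left.2 (Set.Ioi_subset_Ioi (le_of_lt hs))]

theorem tendsto_mul_tsum_exp_halfLogTail :
    Tendsto (fun s : ℝ => s * ∑' k : ℕ,
      Real.exp (-s) ^ k * Real.exp (halfLogTail k (Real.exp (-s)))) (𝓝[>] 0)
      (𝓝 (∫ x in Set.Ioi 0, limitIntegrand x)) := by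
  have herror : Tendsto (fun s : ℝ => 2 * (√s * Real.exp (s / 2))) (𝓝[>] 0) (𝓝 0) :=
    (Continuous.tendsto' (by fun_prop) 0 0 (by simp)).mono_left nhdsWithin_le_nhds
  have hupper := herror.add tendsto_setIntegral_limitIntegrand
  rw [zero_add] at hupper
  refine tendsto_of_tendsto_of_tendsto_of_le_of_le' tendsto_setIntegral_limitIntegrand hupper ?_ ?_
  · filter_upwards [self_mem_nhdsWithin] with s hs using setIntegral_limitIntegrand_le hs
  · filter_upwards [self_mem_nhdsWithin] with s hs using le_setIntegral_limitIntegrand hs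

theorem tendsto_sum_range_heavyCoeff :
    Tendsto (fun n : ℕ => ∑ k ∈ Finset.range n, heavyCoeff k n) atTop
      (𝓝 ((∫ x in Set.Ioi 0, limitIntegrand x) / 2)) := by
  have habel : Tendsto (fun s : ℝ => s * ∑' n : ℕ, heavyDiagonal n * Real.exp (-(n * s))) (𝓝[>] 0)
      (𝓝 ((∫ x in Set.Ioi 0, limitIntegrand x) / 2)) := by
    refine (tendsto_mul_tsum_exp_halfLogTail.div_const 2).congr' ?_
    filter_upwards [self_mem_nhdsWithin] with s hs
    rw [(hasSum_heavyDiagonal_mul_exp hs).tsum_eq, mul_div_assoc]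
  refine (tendsto_sum_range_div_of_tendsto_mul_tsum_exp heavyDiagonal_nonneg
    (fun s hs => (hasSum_heavyDiagonal_mul_exp hs).summable) habel).congr' ?_
  filter_upwards [eventually_ne_atTop 0] with n hn
  rw [sum_range_heavyDiagonal, mul_div_cancel_left₀ _ (Nat.cast_ne_zero.2 hn)]

end Limit

/-- `Ex[T_n] ∼ (√π/2) (∫_0^∞ e^{E(x)/2 − x} dx) · √n` as `n → ∞`:
the expected length of the shortest cycle of a random `n`-cyclation, divided by `√n`,
tends to `(√π/2) ∫_0^∞ e^{E(x)/2 − x} dx`. -/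
theorem expected_shortest_cycle_asymptotic :
    Filter.Tendsto (fun n : ℕ => ExT n / Real.sqrt n) Filter.atTop
      (nhds (Real.sqrt Real.pi / 2 * ∫ x in Set.Ioi (0 : ℝ), Real.exp (Efun x / 2 - x))) := by
  have hlim := tendsto_sum_range_heavyCoeff.mul tendsto_inv_heavyCoeff_zero_mul_sqrt
  rw [div_mul_comm] at hlim
  refine hlim.congr' ?_
  filter_upwards [Filter.eventually_gt_atTop 0] with n hn
  rw [expected_shortestCycle hn, div_div, div_eq_mul_inv]
end

section
/- For every n ≥ 1, the expected lengths of the longest cycle of random n- and (n+1)-cyclations satisfy (2n+1)·Ex[M_{n+1}] ≥ (2n+3)·Ex[M_n]; in particular the sequence (1/4^n)·binom(2n,n)·Ex[M_n] is nondecreasing in n. -/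
/-!
Removing the last interval of an `(n + 1)`-cyclation leaves an `n`-cyclation, and every
`n`-cyclation `c` arises in this way from exactly `2n + 1` cyclations: the new interval either forms
a cycle of its own or is spliced into the matched pair of one of the `2n` endpoints. Splicing never
shortens a cycle, and splicing at one of the `2M` endpoints of a longest cycle, of length `M`,
lengthens that cycle by one. Hence the longest cycle lengths of the `2n + 1` extensions of `c` sum
to at least `(2n + 1) M + 2 M`.
-/

open Equiv Finset

section Cycle

variable {α β : Type*}

lemma image_orbit_closure_subset {G H : Type*} [Group G] [MulAction G α] [Group H] [MulAction H β]
    {s : Set G} {f : α → β} (hf : ∀ g ∈ s, ∀ y, f (g • y) ∈ MulAction.orbit H (f y)) (x : α) :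
    f '' MulAction.orbit (Subgroup.closure s) x ⊆ MulAction.orbit H (f x) := by
  rintro _ ⟨_, ⟨⟨g, hg⟩, rfl⟩, rfl⟩
  change f (g • x) ∈ _
  induction hg using Subgroup.closure_induction generalizing x with
  | mem g hg => exact hf g hg x
  | one => simp
  | mul g h _ _ ihg ihh =>
    rw [mul_smul, ← MulAction.orbit_eq_iff.2 (ihh x)]
    exact ihg (h • x)
  | inv g _ ih => simpa using MulAction.mem_orbit_symm.1 (ih (g⁻¹ • x))

/-- The cycle through `x` of the multigraph with edges `{y, σ y}` and `{y, τ y}`, as a set of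
vertices. For `σ` a cyclation and `τ` the interval pairing, it is by definition an orbit of
`cycGroup`. -/
def cycle (σ τ : Perm α) (x : α) : Set α :=
  MulAction.orbit (Subgroup.closure {σ, τ}) x

variable {σ τ : Perm α} {x y : α}

lemma mem_cycle_self : x ∈ cycle σ τ x := MulAction.mem_orbit_self x

lemma mem_cycle_symm : x ∈ cycle σ τ y ↔ y ∈ cycle σ τ x := MulAction.mem_orbit_symm

lemma apply_left_mem_cycle (h : y ∈ cycle σ τ x) : σ y ∈ cycle σ τ x :=
  MulAction.mem_orbit_of_mem_orbit
    (⟨σ, Subgroup.subset_closure (by simp)⟩ : Subgroup.closure {σ, τ}) h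

lemma apply_right_mem_cycle (h : y ∈ cycle σ τ x) : τ y ∈ cycle σ τ x :=
  MulAction.mem_orbit_of_mem_orbit
    (⟨τ, Subgroup.subset_closure (by simp)⟩ : Subgroup.closure {σ, τ}) h

lemma image_cycle_subset {σ' τ' : Perm β} {f : α → β}
    (hσ : ∀ y, f (σ y) ∈ cycle σ' τ' (f y)) (hτ : ∀ y, f (τ y) ∈ cycle σ' τ' (f y)) (x : α) :
    f '' cycle σ τ x ⊆ cycle σ' τ' (f x) :=
  image_orbit_closure_subset (by rintro _ (rfl | rfl); exacts [hσ, hτ]) x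

lemma image_cycle_subset_cycle_permCongr (e : α ≃ β) (σ τ : Perm α) (x : α) :
    e '' cycle σ τ x ⊆ cycle (e.permCongr σ) (e.permCongr τ) (e x) :=
  image_cycle_subset
    (fun y => by simpa using apply_left_mem_cycle (σ := e.permCongr σ) (mem_cycle_self (x := e y)))
    (fun y => by simpa using apply_right_mem_cycle (τ := e.permCongr τ) (mem_cycle_self (x := e y)))
    x

end Cycle

/-- The perfect matchings of the elements of `α`, as fixed-point-free involutions; an
`n`-cyclation is by definition a perfect matching of `Fin (2 * n)`. -/
def PerfectMatching (α : Type*) : Type _ :=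
  {μ : Perm α // (∀ x, μ x ≠ x) ∧ μ * μ = 1}

namespace PerfectMatching

variable {α β : Type*}

lemma apply_apply (μ : PerfectMatching α) (x : α) : μ.1 (μ.1 x) = x :=
  Perm.ext_iff.1 μ.2.2 x

/-- Transport of perfect matchings along a bijection of the underlying types. -/
def congr (e : α ≃ β) : PerfectMatching α ≃ PerfectMatching β :=
  e.permCongr.subtypeEquiv fun μ => and_congr
    (by simp [e.forall_congr_left, e.eq_symm_apply])
    (by rw [← permCongr_mul, ← e.permCongrHom.map_eq_one_iff]; rfl)

@[simp] lemma congr_apply (e : α ≃ β) (μ : PerfectMatching α) (x : β) :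
    (congr e μ).1 x = e (μ.1 (e.symm x)) := rfl

@[simp] lemma congr_symm (e : α ≃ β) : (congr e).symm = congr e.symm := rfl

/-- The perfect matching of `α ⊕ Fin 2` that extends `μ` by matching the two new points with each
other. -/
def addPair (μ : PerfectMatching α) : PerfectMatching (α ⊕ Fin 2) :=
  ⟨Perm.sumCongr μ.1 (swap 0 1), by
    rintro (x | i)
    · simpa using μ.2.1 x
    · fin_cases i <;> simp, by
    rw [Perm.sumCongr_mul, μ.2.2, swap_mul_self, Perm.sumCongr_one]⟩

@[simp] lemma addPair_inl (μ : PerfectMatching α) (x : α) :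
    μ.addPair.1 (.inl x) = .inl (μ.1 x) := rfl

@[simp] lemma addPair_inr (μ : PerfectMatching α) (i : Fin 2) :
    μ.addPair.1 (.inr i) = .inr (swap 0 1 i) := rfl

lemma addPair_injective : Function.Injective (addPair (α := α)) := fun _ _ h =>
  Subtype.ext <| Perm.ext fun x =>
    Sum.inl_injective (congrArg (fun κ : PerfectMatching (α ⊕ Fin 2) => κ.1 (.inl x)) h)

lemma exists_addPair_eq {ν : PerfectMatching (α ⊕ Fin 2)} (h : ν.1 (.inr 0) = .inr 1) :
    ∃ μ, addPair μ = ν := by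
  have h' : ν.1 (.inr 1) = .inr 0 := by rw [← h, ν.apply_apply]
  have hinl (x : α) : ∃ y, ν.1 (.inl x) = .inl y := by
    rcases hx : ν.1 (.inl x) with y | i
    · exact ⟨y, rfl⟩
    · have := ν.apply_apply (.inl x)
      fin_cases i <;> simp_all
  choose g hg using hinl
  have hginv : Function.Involutive g := fun x => by
    simpa [hg] using ν.apply_apply (.inl x)
  refine ⟨⟨hginv.toPerm, fun x hx => ν.2.1 (.inl x) ?_, Perm.ext hginv⟩,
    Subtype.ext <| Perm.ext ?_⟩
  · exact (hg x).trans (congrArg _ hx)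
  · rintro (x | i)
    · exact (hg x).symm
    · fin_cases i
      exacts [h.symm, h'.symm]

/-- The partner of the new point `inr 0` in `splice μ q`. -/
def splicePartner (q : Option α) : α ⊕ Fin 2 := q.elim (.inr 1) .inl

lemma splicePartner_injective : Function.Injective (splicePartner (α := α)) := by
  rintro (_ | p) (_ | q) h <;> simp_all [splicePartner]

lemma splicePartner_ne_inr_zero (q : Option α) : splicePartner q ≠ .inr 0 := by
  cases q <;> simp [splicePartner]

lemma exists_splicePartner_eq {z : α ⊕ Fin 2} (hz : z ≠ .inr 0) : ∃ q, splicePartner q = z := by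
  rcases z with p | i
  · exact ⟨some p, rfl⟩
  · fin_cases i
    exacts [absurd rfl hz, ⟨none, rfl⟩]

variable [DecidableEq α]

/-- The extension of `μ` to `α ⊕ Fin 2` that splices the edge `{inr 0, inr 1}` into the matched pair
of `p` when `q = some p`, so that `p` is matched with `inr 0` and `inr 1` with `μ p`, and that
matches the two new points with each other when `q = none`. -/
def splice (μ : PerfectMatching α) (q : Option α) : PerfectMatching (α ⊕ Fin 2) :=
  congr (swap (splicePartner q) (.inr 1)) μ.addPair

variable (μ : PerfectMatching α) {p x : α}

lemma splice_inr_zero (q : Option α) : (μ.splice q).1 (.inr 0) = splicePartner q := by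
  simp [splice, swap_apply_of_ne_of_ne (splicePartner_ne_inr_zero q).symm]

lemma splice_some_inl_self : (μ.splice (some p)).1 (.inl p) = .inr 0 := by
  rw [← (μ.splice (some p)).apply_apply (.inr 0), splice_inr_zero]
  rfl

lemma splice_some_inr_one : (μ.splice (some p)).1 (.inr 1) = .inl (μ.1 p) := by
  have : (.inl (μ.1 p) : α ⊕ Fin 2) ≠ .inl p := by simpa using μ.2.1 p
  simp [splice, splicePartner, swap_apply_of_ne_of_ne this]

lemma splice_none_inl : (μ.splice none).1 (.inl x) = .inl (μ.1 x) := by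
  simp [splice, splicePartner]

lemma splice_some_inl_of_ne (hx : x ≠ p) (hμx : μ.1 x ≠ p) :
    (μ.splice (some p)).1 (.inl x) = .inl (μ.1 x) := by
  simp [splice, splicePartner, swap_apply_of_ne_of_ne, hx, hμx]

lemma splice_bijective :
    Function.Bijective fun z : PerfectMatching α × Option α => z.1.splice z.2 := by
  constructor
  · rintro ⟨μ, q⟩ ⟨μ', q'⟩ (h : μ.splice q = μ'.splice q')
    obtain rfl : q = q' := splicePartner_injective <| by
      rw [← splice_inr_zero μ, h, splice_inr_zero]
    rw [addPair_injective ((congr _).injective h)]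
  · intro ν
    obtain ⟨q, hq⟩ := exists_splicePartner_eq (ν.2.1 (.inr 0))
    obtain ⟨μ, hμ⟩ : ∃ μ, addPair μ = (congr (swap (splicePartner q) (.inr 1))).symm ν := by
      apply exists_addPair_eq
      simp [← hq, swap_apply_of_ne_of_ne (splicePartner_ne_inr_zero q).symm]
    exact ⟨(μ, q), by simp only [splice, hμ, Equiv.apply_symm_apply]⟩

/-- A perfect matching of `α ⊕ Fin 2` is obtained by splicing, in exactly one way. -/
noncomputable def spliceEquiv (α : Type*) [DecidableEq α] :
    PerfectMatching α × Option α ≃ PerfectMatching (α ⊕ Fin 2) :=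
  Equiv.ofBijective _ splice_bijective

variable (τ : Perm α)

variable {τ} in
lemma inr_mem_cycle_splice {z : α ⊕ Fin 2}
    (hp : .inl p ∈ cycle (μ.splice (some p)).1 (Perm.sumCongr τ (swap 0 1)) z) (i : Fin 2) :
    .inr i ∈ cycle (μ.splice (some p)).1 (Perm.sumCongr τ (swap 0 1)) z := by
  have h0 : .inr 0 ∈ cycle (μ.splice (some p)).1 (Perm.sumCongr τ (swap 0 1)) z := by
    rw [← μ.splice_some_inl_self]
    exact apply_left_mem_cycle hp
  fin_cases i
  · exact h0
  · simpa using apply_right_mem_cycle h0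

lemma inl_apply_mem_cycle_splice (q : Option α) (y : α) :
    .inl (μ.1 y) ∈ cycle (μ.splice q).1 (Perm.sumCongr τ (swap 0 1)) (.inl y) := by
  set C := cycle (μ.splice q).1 (Perm.sumCongr τ (swap 0 1))
  rcases q with _ | p
  · rw [← splice_none_inl]
    exact apply_left_mem_cycle mem_cycle_self
  -- The path `p`, `inr 0`, `inr 1`, `μ p` replaces the matched pair `{p, μ p}`.
  have hp : .inl (μ.1 p) ∈ C (.inl p) := by
    simpa only [splice_some_inr_one] using
      apply_left_mem_cycle (μ.inr_mem_cycle_splice mem_cycle_self 1)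
  rcases eq_or_ne y p with rfl | hy
  · exact hp
  rcases eq_or_ne (μ.1 y) p with rfl | hμy
  · rwa [mem_cycle_symm, apply_apply] at hp
  · rw [← splice_some_inl_of_ne μ hy hμy]
    exact apply_left_mem_cycle mem_cycle_self

lemma image_inl_cycle_subset (q : Option α) (x : α) :
    .inl '' cycle μ.1 τ x ⊆ cycle (μ.splice q).1 (Perm.sumCongr τ (swap 0 1)) (.inl x) :=
  image_cycle_subset (μ.inl_apply_mem_cycle_splice τ q)
    (fun _ => apply_right_mem_cycle (τ := Perm.sumCongr τ (swap 0 1)) mem_cycle_self) x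

variable [Finite α]

lemma ncard_cycle_le_ncard_cycle_splice (q : Option α) (x : α) :
    (cycle μ.1 τ x).ncard ≤
      (cycle (μ.splice q).1 (Perm.sumCongr τ (swap 0 1)) (.inl x)).ncard := by
  rw [← Set.ncard_image_of_injective _ (Sum.inl_injective (β := Fin 2))]
  exact Set.ncard_le_ncard (μ.image_inl_cycle_subset τ q x)

lemma ncard_cycle_add_two_le_ncard_cycle_splice (hp : p ∈ cycle μ.1 τ x) :
    (cycle μ.1 τ x).ncard + 2 ≤
      (cycle (μ.splice (some p)).1 (Perm.sumCongr τ (swap 0 1)) (.inl x)).ncard := by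
  set C := cycle (μ.splice (some p)).1 (Perm.sumCongr τ (swap 0 1)) (.inl x)
  have hold : .inl '' cycle μ.1 τ x ⊆ C := μ.image_inl_cycle_subset τ (some p) x
  have hnew (i : Fin 2) : .inr i ∈ C := μ.inr_mem_cycle_splice (hold ⟨p, hp, rfl⟩) i
  have hdisj : Disjoint (Sum.inl '' cycle μ.1 τ x) {.inr (0 : Fin 2), .inr 1} := by
    simp [Set.disjoint_left]
  calc (cycle μ.1 τ x).ncard + 2
      = (.inl '' cycle μ.1 τ x ∪ {.inr 0, .inr 1} : Set (α ⊕ Fin 2)).ncard := by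
        rw [Set.ncard_union_eq hdisj, Set.ncard_image_of_injective _ Sum.inl_injective,
          Set.ncard_pair (by simp)]
    _ ≤ C.ncard :=
        Set.ncard_le_ncard (Set.union_subset hold (Set.pair_subset (hnew 0) (hnew 1)))

end PerfectMatching

/-- The endpoints of the first `n` intervals, followed by those of one more interval. -/
def endpointsSucc (n : ℕ) : Fin (2 * n) ⊕ Fin 2 ≃ Fin (2 * (n + 1)) := finSumFinEquiv

@[simp] lemma endpointsSucc_inl_val {n : ℕ} (x : Fin (2 * n)) :
    (endpointsSucc n (.inl x)).val = x.val := rfl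

@[simp] lemma endpointsSucc_inr_val (n : ℕ) (i : Fin 2) :
    (endpointsSucc n (.inr i)).val = 2 * n + i.val := rfl

lemma intervalPerm_val {n : ℕ} (x : Fin (2 * n)) :
    (intervalPerm n x).val = if x.val % 2 = 0 then x.val + 1 else x.val - 1 := rfl

lemma intervalPerm_succ (n : ℕ) :
    intervalPerm (n + 1) =
      (endpointsSucc n).permCongr (Perm.sumCongr (intervalPerm n) (swap 0 1)) := by
  ext x
  obtain ⟨y | i, rfl⟩ := (endpointsSucc n).surjective x
  · rw [intervalPerm_val, permCongr_apply, symm_apply_apply]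
    exact (intervalPerm_val y).symm
  · fin_cases i <;> simp [intervalPerm_val]

namespace Cyclation

variable {n : ℕ}

/-- The bijection between `(n + 1)`-cyclations and `n`-cyclations with a choice of the way to add
the interval of the endpoints `2 * n` and `2 * n + 1`: splice it into the matched pair of an
endpoint, or close it into a cycle of length one (`none`). -/
noncomputable def addInterval (n : ℕ) : Cyclation n × Option (Fin (2 * n)) ≃ Cyclation (n + 1) :=
  (PerfectMatching.spliceEquiv (Fin (2 * n))).trans (PerfectMatching.congr (endpointsSucc n))

lemma ncard_orbit_div_two_le_longestCycle (c : Cyclation n) (x : Fin (2 * n)) :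
    (MulAction.orbit (cycGroup c) x).ncard / 2 ≤ longestCycle c :=
  Nat.div_le_div_right <|
    le_sup (f := fun y : Fin (2 * n) => (MulAction.orbit (cycGroup c) y).ncard) (mem_univ x)

lemma exists_longestCycle_eq (hn : 1 ≤ n) (c : Cyclation n) :
    ∃ x : Fin (2 * n), longestCycle c = (MulAction.orbit (cycGroup c) x).ncard / 2 := by
  have : Nonempty (Fin (2 * n)) := ⟨⟨0, by omega⟩⟩
  obtain ⟨x, -, hx⟩ := exists_mem_eq_sup univ univ_nonempty
    fun x : Fin (2 * n) => (MulAction.orbit (cycGroup c) x).ncard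
  exact ⟨x, congrArg (· / 2) hx⟩

lemma ncard_cycle_splice_div_two_le_longestCycle (c : Cyclation n) (q : Option (Fin (2 * n)))
    (z : Fin (2 * n) ⊕ Fin 2) :
    (cycle (PerfectMatching.splice c q).1 (Perm.sumCongr (intervalPerm n) (swap 0 1)) z).ncard / 2
      ≤ longestCycle (addInterval n (c, q)) := by
  refine le_trans (Nat.div_le_div_right ?_)
    (ncard_orbit_div_two_le_longestCycle _ (endpointsSucc n z))
  rw [← Set.ncard_image_of_injective _ (endpointsSucc n).injective, cycGroup, intervalPerm_succ]
  exact Set.ncard_le_ncard (image_cycle_subset_cycle_permCongr (endpointsSucc n) _ _ z)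

lemma longestCycle_le_longestCycle_addInterval (hn : 1 ≤ n) (c : Cyclation n)
    (q : Option (Fin (2 * n))) : longestCycle c ≤ longestCycle (addInterval n (c, q)) := by
  obtain ⟨x, hx⟩ := c.exists_longestCycle_eq hn
  rw [hx]
  exact (Nat.div_le_div_right (PerfectMatching.ncard_cycle_le_ncard_cycle_splice c _ q x)).trans
    (c.ncard_cycle_splice_div_two_le_longestCycle q _)

lemma mul_longestCycle_le_sum_addInterval (hn : 1 ≤ n) (c : Cyclation n) :
    (2 * n + 3) * longestCycle c ≤ ∑ q, longestCycle (addInterval n (c, q)) := by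
  classical
  obtain ⟨x, hx⟩ := c.exists_longestCycle_eq hn
  set O := MulAction.orbit (cycGroup c) x
  have hsome (p : Fin (2 * n)) :
      longestCycle c + (if p ∈ O then 1 else 0) ≤ longestCycle (addInterval n (c, some p)) := by
    split_ifs with hp
    · have hle : O.ncard + 2 ≤ _ :=
        PerfectMatching.ncard_cycle_add_two_le_ncard_cycle_splice c (intervalPerm n) hp
      have := c.ncard_cycle_splice_div_two_le_longestCycle (some p) (.inl x)
      omega
    · exact c.longestCycle_le_longestCycle_addInterval hn _
  have hO : ∑ p, (if p ∈ O then 1 else 0) = O.ncard := by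
    rw [sum_boole, Nat.cast_id, Set.filter_mem_univ_eq_toFinset, Set.ncard_eq_toFinset_card']
  calc (2 * n + 3) * longestCycle c
      = longestCycle c + (2 * n * longestCycle c + 2 * longestCycle c) := by ring
    _ ≤ longestCycle c + (2 * n * longestCycle c + O.ncard) := by gcongr; omega
    _ = longestCycle c + ∑ p, (longestCycle c + if p ∈ O then 1 else 0) := by
        simp [sum_add_distrib, hO]
    _ ≤ longestCycle (addInterval n (c, none)) +
          ∑ p, longestCycle (addInterval n (c, some p)) := by
        gcongr with p
        · exact c.longestCycle_le_longestCycle_addInterval hn none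
        · exact hsome p
    _ = ∑ q, longestCycle (addInterval n (c, q)) := by rw [Fintype.sum_option]

lemma mul_sum_longestCycle_le (hn : 1 ≤ n) :
    (2 * n + 3) * ∑ c : Cyclation n, longestCycle c ≤ ∑ c : Cyclation (n + 1), longestCycle c := by
  rw [← (addInterval n).sum_comp, Fintype.sum_prod_type, mul_sum]
  exact sum_le_sum fun c _ => c.mul_longestCycle_le_sum_addInterval hn

lemma card_succ (n : ℕ) :
    Fintype.card (Cyclation (n + 1)) = (2 * n + 1) * Fintype.card (Cyclation n) := by
  simp [← Fintype.card_congr (addInterval n), mul_comm]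

end Cyclation

lemma mul_ExM_succ (n : ℕ) :
    (2 * (n : ℝ) + 1) * ExM (n + 1) =
      (∑ c : Cyclation (n + 1), (longestCycle c : ℝ)) / Fintype.card (Cyclation n) := by
  rw [ExM, Cyclation.card_succ, mul_div_assoc']
  push_cast
  exact mul_div_mul_left _ _ (by positivity)

lemma ExM_nonneg (n : ℕ) : 0 ≤ ExM n := by
  unfold ExM
  positivity

lemma choose_two_mul_succ_div_four_pow (n : ℕ) :
    (1 / 4 ^ (n + 1) : ℝ) * Nat.choose (2 * (n + 1)) (n + 1) =
      (1 / 4 ^ n : ℝ) * Nat.choose (2 * n) n * ((2 * n + 1) / (2 * n + 2)) := by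
  have h : ((n : ℝ) + 1) * (2 * (n + 1)).choose (n + 1) = 2 * (2 * n + 1) * (2 * n).choose n := by
    exact_mod_cast Nat.succ_mul_centralBinom_succ n
  field_simp
  linear_combination 2 * 4 ^ n * h

/-- For every `n ≥ 1`, `(2n+1)·Ex[M_{n+1}] ≥ (2n+3)·Ex[M_n]`; in particular the sequence
`(1/4^n)·binom(2n,n)·Ex[M_n]` is nondecreasing in `n`. -/
theorem expected_longest_cycle_monotone (n : ℕ) (hn : 1 ≤ n) :
    (2 * (n : ℝ) + 3) * ExM n ≤ (2 * (n : ℝ) + 1) * ExM (n + 1) ∧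
    (1 / 4 ^ n : ℝ) * Nat.choose (2 * n) n * ExM n
      ≤ (1 / 4 ^ (n + 1) : ℝ) * Nat.choose (2 * (n + 1)) (n + 1) * ExM (n + 1) := by
  have hmean : (2 * (n : ℝ) + 3) * ExM n ≤ (2 * (n : ℝ) + 1) * ExM (n + 1) := by
    rw [mul_ExM_succ, ExM, mul_div_assoc']
    gcongr
    exact_mod_cast Cyclation.mul_sum_longestCycle_le hn
  refine ⟨hmean, ?_⟩
  have hstep : ExM n ≤ (2 * n + 1) / (2 * n + 2) * ExM (n + 1) := by
    rw [div_mul_eq_mul_div, le_div_iff₀ (by positivity)]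
    linarith [ExM_nonneg n]
  calc (1 / 4 ^ n : ℝ) * Nat.choose (2 * n) n * ExM n
      ≤ (1 / 4 ^ n : ℝ) * Nat.choose (2 * n) n * ((2 * n + 1) / (2 * n + 2) * ExM (n + 1)) := by
        gcongr
    _ = (1 / 4 ^ (n + 1) : ℝ) * Nat.choose (2 * (n + 1)) (n + 1) * ExM (n + 1) := by
        rw [choose_two_mul_succ_div_four_pow, mul_assoc _ _ (ExM (n + 1))]
end
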